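/- In dimension 7, every finite set S of points on the unit sphere of EuclideanSpace ℝ (Fin 7) (i.e., ‖x‖ = 1 for all x ∈ S) such that any two distinct points of S are at Euclidean distance at least 1 has cardinality at most 134; that is, the kissing number in dimension 7 is at most 134. -/

import Mathlib

/-!
This is the three-point semidefinite programming bound of Bachoc and Vallentin. Let `S` be a set of
unit vectors at mutual distance at least `1`. Fix `z ∈ S` and project to the hyperplane `zᗮ`, which
has dimension `6 = 2 * ν + 2` with `ν = 2`. There the Gegenbauer kernels `C_k^(2)` are positive
definite, because for the Fischer inner product of polynomials they are, up to a constant, the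
reproducing kernels of the harmonic polynomials. Hence
`∑ x, ∑ y, h(⟪x, z⟫) * h(⟪y, z⟫) * C_k^(2)(x, y) ≥ 0` for every polynomial `h`, where `x` and `y`
range over `S` without `z`. Summing a suitable combination of these inequalities
over `z`, and spreading the terms with `x = y` over the triples of distinct points, gives a function
of `⟪x, y⟫`, `⟪y, z⟫`, `⟪z, x⟫` that is nonnegative on average. If `S` had `135` elements, it would
however be negative at every triple: up to sums of squares multiplied by polynomials that are
nonnegative at three points of `S`, it is a negative constant plus a polynomial with small
coefficients, the rounding error of a numerical solution of the dual program. These coefficients are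
read off from the digits of a single integer, the value of the polynomial at powers of a large base.
-/

namespace KissingNumber

/-! ### Gegenbauer polynomials -/

/-- The coefficients of the power series `f / (1 - 2 * L * X + W * X ^ 2)`, where `f` is given by
its coefficients. -/
def divQuadratic {A : Type*} [Add A] [Sub A] [Mul A] (L W : A) (f : ℕ → A) : ℕ → A
  | 0 => f 0
  | 1 => f 1 + (L + L) * f 0
  | k + 2 => f (k + 2) + (L + L) * divQuadratic L W f (k + 1) - W * divQuadratic L W f k

/-- The homogenised Gegenbauer polynomials: `gegenbauer ν L W k` is the coefficient of `X ^ k` in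
`(1 - 2 * L * X + W * X ^ 2) ^ (-ν)`. For `W = 1` it is the classical `C_k^(ν)` at `L`. -/
def gegenbauer {A : Type*} [Zero A] [One A] [Add A] [Sub A] [Mul A] : ℕ → A → A → ℕ → A
  | 0, _, _ => fun k => if k = 0 then 1 else 0
  | ν + 1, L, W => divQuadratic L W (gegenbauer ν L W)

section Gegenbauer

variable {A B : Type*} [CommRing A] [CommRing B] (ν : ℕ) (L W : A) (k : ℕ)

theorem map_divQuadratic (φ : A →+* B) (f : ℕ → A) :
    φ (divQuadratic L W f k) = divQuadratic (φ L) (φ W) (φ ∘ f) k := by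
  induction k using Nat.twoStepInduction with
  | zero | one => simp [divQuadratic]
  | more k ih ih' => simp [divQuadratic, ih, ih']

theorem map_gegenbauer (φ : A →+* B) :
    φ (gegenbauer ν L W k) = gegenbauer ν (φ L) (φ W) k := by
  induction ν generalizing k with
  | zero => simp [gegenbauer, apply_ite φ]
  | succ ν ih => rw [gegenbauer, map_divQuadratic, gegenbauer, show φ ∘ _ = _ from funext ih]

theorem divQuadratic_mul (a : A) (f : ℕ → A) :
    divQuadratic (a * L) (a ^ 2 * W) (fun k => a ^ k * f k) k = a ^ k * divQuadratic L W f k := by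
  induction k using Nat.twoStepInduction with
  | zero => simp [divQuadratic]
  | one => simp only [divQuadratic]; ring
  | more k ih ih' => simp only [divQuadratic, ih, ih']; ring

theorem gegenbauer_mul (a : A) :
    gegenbauer ν (a * L) (a ^ 2 * W) k = a ^ k * gegenbauer ν L W k := by
  induction ν generalizing k with
  | zero => by_cases hk : k = 0 <;> simp [gegenbauer, hk]
  | succ ν ih => rw [gegenbauer, funext ih, divQuadratic_mul, gegenbauer]

theorem gegenbauer_mul_self :
    gegenbauer ν L (L * L) k = (gegenbauer ν (1 : ℤ) 1 k : ℤ) * L ^ k := by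
  have homogeneous := gegenbauer_mul ν 1 1 k L
  rw [mul_one, mul_one, pow_two] at homogeneous
  rw [homogeneous, mul_comm, ← eq_intCast (Int.castRingHom A), map_gegenbauer, map_one]

theorem dvd_gegenbauer_sub : W ∣ gegenbauer ν L W k - L ^ k * gegenbauer ν 1 0 k := by
  rw [← Ideal.mem_span_singleton, ← Ideal.Quotient.eq, ← gegenbauer_mul, map_gegenbauer,
    map_gegenbauer, Ideal.Quotient.mk_singleton_self]
  simp

theorem divQuadratic_one_zero_pos {f : ℕ → ℝ} (hf₀ : 0 < f 0) (hf : ∀ k, 0 ≤ f k) :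
    0 < divQuadratic 1 0 f k := by
  induction k using Nat.twoStepInduction with
  | zero => simpa [divQuadratic]
  | one => simpa [divQuadratic] using by linarith [hf 1]
  | more k _ ih => simpa [divQuadratic] using by linarith [hf (k + 2)]

theorem gegenbauer_one_zero_pos {ν : ℕ} (hν : ν ≠ 0) : 0 < gegenbauer ν (1 : ℝ) 0 k := by
  obtain ⟨ν, rfl⟩ := Nat.exists_eq_succ_of_ne_zero hν
  induction ν generalizing k with
  | zero =>
    refine divQuadratic_one_zero_pos k (by simp [gegenbauer]) fun k => ?_
    by_cases hk : k = 0 <;> simp [gegenbauer, hk]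
  | succ ν ih =>
    exact divQuadratic_one_zero_pos k (ih 0 ν.succ_ne_zero) fun k => (ih k ν.succ_ne_zero).le

open MvPolynomial in
theorem isHomogeneous_divQuadratic {σ : Type*} {L W : MvPolynomial σ A} (hL : L.IsHomogeneous 1)
    (hW : W.IsHomogeneous 2) {f : ℕ → MvPolynomial σ A} (hf : ∀ k, (f k).IsHomogeneous k) :
    (divQuadratic L W f k).IsHomogeneous k := by
  induction k using Nat.twoStepInduction with
  | zero => exact hf 0
  | one => exact (hf 1).add ((hL.add hL).mul (hf 0))
  | more k ih ih' =>
    refine ((hf _).add ?_).sub ?_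
    · simpa only [add_comm 1] using (hL.add hL).mul ih'
    · simpa only [add_comm 2] using hW.mul ih

open MvPolynomial in
theorem isHomogeneous_gegenbauer {σ : Type*} {L W : MvPolynomial σ A} (hL : L.IsHomogeneous 1)
    (hW : W.IsHomogeneous 2) : (gegenbauer ν L W k).IsHomogeneous k := by
  induction ν generalizing k with
  | zero =>
    by_cases hk : k = 0
    · simpa [gegenbauer, hk] using isHomogeneous_one σ A
    · simpa [gegenbauer, hk] using isHomogeneous_zero σ A k
  | succ ν ih => exact isHomogeneous_divQuadratic k hL hW ih

end Gegenbauer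

theorem derivation_pow_of_mul_eq_one {R A : Type*} [CommRing R] [CommRing A] [Algebra R A]
    (D : Derivation R A A) {a b : A} (hab : a * b = 1) (n : ℕ) :
    D (a ^ n) = -(n * a ^ (n + 1) * D b) := by
  rcases n with _ | n
  · simp
  · rw [D.leibniz_pow, D.leibniz_of_mul_eq_one hab, Nat.add_sub_cancel]
    simp only [smul_eq_mul, nsmul_eq_mul]
    ring

theorem derivation_derivation_pow_of_mul_eq_one {R A : Type*} [CommRing R] [CommRing A]
    [Algebra R A] (D : Derivation R A A) {a b : A} (hab : a * b = 1) (n : ℕ) :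
    D (D (a ^ n)) =
      n * (n + 1) * a ^ (n + 2) * D b ^ 2 - n * a ^ (n + 1) * D (D b) := by
  rw [derivation_pow_of_mul_eq_one D hab, map_neg, D.leibniz, D.leibniz,
    derivation_pow_of_mul_eq_one D hab, D.map_natCast]
  simp only [smul_eq_mul]
  push_cast
  ring

section GeneratingFunction

open PowerSeries

variable {A : Type*} [CommRing A] (L W : A)

/-- The power series `1 - 2 * L * X + W * X ^ 2`. -/
noncomputable def quadraticSeries : A⟦X⟧ := 1 - C (2 * L) * X + C W * X ^ 2

theorem mk_divQuadratic_mul (f : ℕ → A) : mk (divQuadratic L W f) * quadraticSeries L W = mk f := by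
  have expand : mk (divQuadratic L W f) * quadraticSeries L W = mk (divQuadratic L W f) -
      C (2 * L) * (mk (divQuadratic L W f) * X) + C W * (mk (divQuadratic L W f) * X * X) := by
    rw [quadraticSeries]; ring
  rw [expand]
  ext (_ | _ | k)
  · simp [divQuadratic]
  all_goals
    simp only [map_add, map_sub, coeff_C_mul, coeff_succ_mul_X, coeff_zero_mul_X, coeff_mk,
      divQuadratic]
    ring

theorem mk_gegenbauer_one_mul : mk (gegenbauer 1 L W) * quadraticSeries L W = 1 := by
  rw [gegenbauer, mk_divQuadratic_mul]
  ext k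
  simp [gegenbauer, coeff_one]

theorem mk_gegenbauer (ν : ℕ) : mk (gegenbauer ν L W) = mk (gegenbauer 1 L W) ^ ν := by
  induction ν with
  | zero =>
    ext k
    simp [gegenbauer, coeff_one]
  | succ ν ih =>
    calc mk (gegenbauer (ν + 1) L W)
        = mk (gegenbauer (ν + 1) L W) * quadraticSeries L W * mk (gegenbauer 1 L W) := by
          rw [mul_assoc, mul_comm (quadraticSeries L W), mk_gegenbauer_one_mul, mul_one]
      _ = mk (gegenbauer 1 L W) ^ (ν + 1) := by
          rw [gegenbauer, mk_divQuadratic_mul, ih, pow_succ]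

variable {R : Type*} [CommRing R] [Algebra R A] (D : Derivation R A A)

/-- The derivation of `A⟦X⟧` that applies a derivation of `A` to every coefficient. -/
noncomputable def coeffDerivation : Derivation R A⟦X⟧ A⟦X⟧ :=
  Derivation.mk'
    { toFun f := mk fun k => D (coeff k f)
      map_add' f g := by ext; simp
      map_smul' r f := by ext; simp }
    fun f g => by
      ext k
      rw [smul_eq_mul, smul_eq_mul, mul_comm g, map_add, coeff_mul, coeff_mul,
        ← Finset.sum_add_distrib]
      simp [coeff_mul, mul_comm]

@[simp]
theorem coeff_coeffDerivation (k : ℕ) (f : A⟦X⟧) :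
    coeff k (coeffDerivation D f) = D (coeff k f) :=
  coeff_mk k fun k => D (coeff k f)

@[simp]
theorem coeffDerivation_C (a : A) : coeffDerivation D (C a) = C (D a) := by
  ext k
  simp [coeff_C, apply_ite D]

@[simp]
theorem coeffDerivation_X : coeffDerivation D X = 0 := by
  ext k
  simp [coeff_X, apply_ite D]

theorem coeffDerivation_quadraticSeries :
    coeffDerivation D (quadraticSeries L W) = C (D W) * X ^ 2 - C (2 * D L) * X := by
  have h2 : D 2 = 0 := mod_cast D.map_natCast 2
  have hX : coeffDerivation D (X ^ 2) = 0 := by simp [pow_two]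
  simp only [quadraticSeries, map_add, map_sub, Derivation.leibniz, hX, Derivation.map_one_eq_zero,
    coeffDerivation_C, coeffDerivation_X, smul_eq_mul, h2, mul_zero, add_zero]
  ring

theorem coeffDerivation_coeffDerivation_quadraticSeries :
    coeffDerivation D (coeffDerivation D (quadraticSeries L W)) =
      C (D (D W)) * X ^ 2 - C (2 * D (D L)) * X := by
  have h2 : D 2 = 0 := mod_cast D.map_natCast 2
  have hX : coeffDerivation D (X ^ 2) = 0 := by simp [pow_two]
  simp only [coeffDerivation_quadraticSeries, map_sub, Derivation.leibniz, hX, coeffDerivation_C,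
    coeffDerivation_X, smul_eq_mul, h2, mul_zero, add_zero]
  ring

variable {L W} {ι : Type*} [Fintype ι] {D : ι → Derivation R A A} {c : A}

theorem sum_coeffDerivation_quadraticSeries_sq (hLL : ∑ i, D i L ^ 2 = c)
    (hLW : ∑ i, D i L * D i W = 2 * c * L) (hWW : ∑ i, D i W ^ 2 = 4 * c * W) :
    ∑ i, coeffDerivation (D i) (quadraticSeries L W) ^ 2 =
      C (4 * c) * X ^ 2 * quadraticSeries L W := by
  calc ∑ i, coeffDerivation (D i) (quadraticSeries L W) ^ 2
      = C (∑ i, D i W ^ 2) * X ^ 4 - C (4 * ∑ i, D i L * D i W) * X ^ 3 +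
          C (4 * ∑ i, D i L ^ 2) * X ^ 2 := by
        simp only [coeffDerivation_quadraticSeries, map_mul, map_sum, map_pow, map_ofNat,
          Finset.mul_sum, Finset.sum_mul, ← Finset.sum_sub_distrib, ← Finset.sum_add_distrib]
        exact Finset.sum_congr rfl fun i _ => by ring
    _ = C (4 * c) * X ^ 2 * quadraticSeries L W := by
        rw [hLL, hLW, hWW, quadraticSeries]
        simp only [map_mul, map_ofNat]
        ring

theorem sum_derivation_derivation_gegenbauer (ν k : ℕ) (hLL : ∑ i, D i L ^ 2 = c)
    (hLW : ∑ i, D i L * D i W = 2 * c * L) (hWW : ∑ i, D i W ^ 2 = 4 * c * W)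
    (hL : ∑ i, D i (D i L) = 0) (hW : ∑ i, D i (D i W) = 4 * (ν + 1) * c) :
    ∑ i, D i (D i (gegenbauer ν L W k)) = 0 := by
  set J := mk (gegenbauer 1 L W)
  set P := quadraticSeries L W
  have hJP : J * P = 1 := mk_gegenbauer_one_mul L W
  have sum_sq : ∑ i, coeffDerivation (D i) P ^ 2 = C (4 * c) * X ^ 2 * P :=
    sum_coeffDerivation_quadraticSeries_sq hLL hLW hWW
  have sum_second : ∑ i, coeffDerivation (D i) (coeffDerivation (D i) P) =
      C (4 * (ν + 1) * c) * X ^ 2 := by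
    rw [Finset.sum_congr rfl fun i _ => coeffDerivation_coeffDerivation_quadraticSeries L W (D i),
      Finset.sum_sub_distrib, ← Finset.sum_mul, ← Finset.sum_mul, ← map_sum, ← map_sum,
      ← Finset.mul_sum, hL, hW]
    simp
  have sum_series : ∑ i, coeffDerivation (D i) (coeffDerivation (D i) (J ^ ν)) = 0 :=
    calc ∑ i, coeffDerivation (D i) (coeffDerivation (D i) (J ^ ν))
      _ = ν * (ν + 1) * J ^ (ν + 2) * ∑ i, coeffDerivation (D i) P ^ 2 -
          ν * J ^ (ν + 1) * ∑ i, coeffDerivation (D i) (coeffDerivation (D i) P) := by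
          rw [Finset.mul_sum, Finset.mul_sum, ← Finset.sum_sub_distrib]
          exact Finset.sum_congr rfl fun i _ => derivation_derivation_pow_of_mul_eq_one _ hJP ν
      _ = (ν : A⟦X⟧) * ((ν : A⟦X⟧) + 1) * J ^ (ν + 1) * C (4 * c) * X ^ 2 * (J * P) -
          (ν : A⟦X⟧) * J ^ (ν + 1) * (C (4 * ((ν : A) + 1) * c) * X ^ 2) := by
          rw [sum_sq, sum_second]
          ring
      _ = 0 := by
          rw [hJP]
          simp only [map_mul, map_add, map_natCast, map_one, map_ofNat]
          ring
  simpa [J, ← mk_gegenbauer] using congrArg (coeff k) sum_series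

end GeneratingFunction

section Fischer

open MvPolynomial
open scoped Nat

variable {ι : Type*}

/-- The linear form `x ↦ y ⬝ᵥ x`. -/
noncomputable def linearForm [Fintype ι] (y : ι → ℝ) : MvPolynomial ι ℝ := ∑ i, C (y i) * X i

/-- The quadratic form `x ↦ x ⬝ᵥ x`. -/
noncomputable def sumSq [Fintype ι] : MvPolynomial ι ℝ := ∑ i, X i ^ 2

/-- The Laplace operator. -/
noncomputable def laplacian [Fintype ι] (p : MvPolynomial ι ℝ) : MvPolynomial ι ℝ :=
  ∑ i, pderiv i (pderiv i p)

/-- The Fischer inner product, for which the monomials `X ^ m` are orthogonal with squared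
norms `m !` and multiplication by `X i` is adjoint to the partial derivative. -/
noncomputable def fischer [Fintype ι] : MvPolynomial ι ℝ →ₗ[ℝ] MvPolynomial ι ℝ →ₗ[ℝ] ℝ :=
  (basisMonomials ι ℝ).constr ℝ fun m => ((∏ i, (m i)! : ℕ) : ℝ) • lcoeff ℝ m

variable [Fintype ι]

theorem fischer_monomial (m : ι →₀ ℕ) (q : MvPolynomial ι ℝ) :
    fischer (monomial m 1) q = ((∏ i, (m i)! : ℕ) : ℝ) * coeff m q := by
  rw [fischer, ← congrFun (coe_basisMonomials ι ℝ) m, Module.Basis.constr_basis]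
  rfl

theorem fischer_self_nonneg (p : MvPolynomial ι ℝ) : 0 ≤ fischer p p := by
  rw [fischer, Module.Basis.constr_apply, Finsupp.sum, LinearMap.sum_apply]
  refine Finset.sum_nonneg fun m _ => ?_
  change 0 ≤ coeff m p * (((∏ i, (m i)! : ℕ) : ℝ) * coeff m p)
  rw [mul_left_comm]
  exact mul_nonneg (by positivity) (mul_self_nonneg _)

theorem prod_factorial_add_single (m : ι →₀ ℕ) (i : ι) :
    ∏ j, ((m + Finsupp.single i 1 : ι →₀ ℕ) j)! = (m i + 1) * ∏ j, (m j)! := by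
  classical
  rw [← Finset.mul_prod_erase _ _ (Finset.mem_univ i),
    ← Finset.mul_prod_erase _ _ (Finset.mem_univ i), ← mul_assoc, Finsupp.add_apply,
    Finsupp.single_eq_same, Nat.factorial_succ]
  congr 1
  refine Finset.prod_congr rfl fun j hj => ?_
  rw [Finsupp.add_apply, Finsupp.single_eq_of_ne (Finset.ne_of_mem_erase hj), add_zero]

theorem fischer_X_mul (i : ι) (p q : MvPolynomial ι ℝ) :
    fischer (X i * p) q = fischer p (pderiv i q) := by
  induction p using MvPolynomial.induction_on' with
  | monomial m a =>
    have hsmul : monomial m a = a • monomial m (1 : ℝ) := by simp [smul_monomial]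
    rw [hsmul, mul_smul_comm, map_smul, map_smul, LinearMap.smul_apply,
      LinearMap.smul_apply, X, monomial_mul, one_mul, fischer_monomial, fischer_monomial,
      coeff_pderiv, add_comm, prod_factorial_add_single]
    push_cast
    ring
  | add p p' hp hp' => rw [mul_add, map_add, map_add, LinearMap.add_apply, LinearMap.add_apply, hp,
      hp']

theorem fischer_sumSq_mul (p q : MvPolynomial ι ℝ) :
    fischer (sumSq * p) q = fischer p (laplacian q) := by
  simp only [sumSq, laplacian, Finset.sum_mul, map_sum, LinearMap.sum_apply, pow_two, mul_assoc,
    fischer_X_mul]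

theorem fischer_linearForm_mul (y : ι → ℝ) (p q : MvPolynomial ι ℝ) :
    fischer (linearForm y * p) q = ∑ i, y i * fischer p (pderiv i q) := by
  simp only [linearForm, Finset.sum_mul, map_sum, LinearMap.sum_apply, C_mul', smul_mul_assoc,
    map_smul, LinearMap.smul_apply, fischer_X_mul, smul_eq_mul]

theorem fischer_linearForm_pow (y : ι → ℝ) {k : ℕ} {q : MvPolynomial ι ℝ}
    (hq : q.IsHomogeneous k) : fischer (linearForm y ^ k) q = k ! * eval y q := by
  induction k generalizing q with
  | zero =>
    obtain ⟨a, rfl⟩ : ∃ a, q = C a :=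
      ⟨_, totalDegree_eq_zero_iff_eq_C.1 ((totalDegree_zero_iff_isHomogeneous ι).2 hq)⟩
    rw [pow_zero, ← C_1, C_apply, fischer_monomial]
    simp
  | succ k ih =>
    have euler := congrArg (eval y) hq.sum_X_mul_pderiv
    simp only [map_sum, map_mul, eval_X, nsmul_eq_mul, map_natCast] at euler
    calc fischer (linearForm y ^ (k + 1)) q
        = k ! * ∑ i, y i * eval y (pderiv i q) := by
          rw [pow_succ', fischer_linearForm_mul, Finset.mul_sum]
          exact Finset.sum_congr rfl fun i _ => by rw [ih hq.pderiv, mul_left_comm]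
      _ = (k + 1)! * eval y q := by
          rw [euler, Nat.factorial_succ]
          push_cast
          ring

end Fischer

section Zonal

open MvPolynomial
open scoped Nat

variable {ι : Type*} [Fintype ι] (ν : ℕ) (y : ι → ℝ) (k : ℕ)

/-- The zonal polynomial of degree `k` with pole `y`, which is harmonic if `card ι = 2 * ν + 2`. -/
noncomputable def zonal : MvPolynomial ι ℝ :=
  gegenbauer ν (linearForm y) (C (y ⬝ᵥ y) * sumSq) k

theorem isHomogeneous_zonal : (zonal ν y k).IsHomogeneous k :=
  isHomogeneous_gegenbauer ν k
    (IsHomogeneous.sum _ _ _ fun i _ => (isHomogeneous_X ℝ i).C_mul _)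
    ((IsHomogeneous.sum _ _ _ fun i _ => isHomogeneous_X_pow i 2).C_mul _)

theorem eval_zonal (x : ι → ℝ) :
    eval x (zonal ν y k) = gegenbauer ν (y ⬝ᵥ x) ((y ⬝ᵥ y) * (x ⬝ᵥ x)) k := by
  rw [zonal, map_gegenbauer]
  simp [linearForm, sumSq, dotProduct, pow_two]

theorem sumSq_dvd_zonal_sub :
    sumSq ∣ zonal ν y k - linearForm y ^ k * C (gegenbauer ν 1 0 k) := by
  have hC : (C (gegenbauer ν 1 0 k) : MvPolynomial ι ℝ) = gegenbauer ν 1 0 k := by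
    simpa using map_gegenbauer ν (1 : ℝ) 0 k (C (σ := ι))
  rw [hC]
  exact (dvd_mul_left _ _).trans (dvd_gegenbauer_sub ν _ _ k)

theorem pderiv_linearForm (i : ι) : pderiv i (linearForm y) = C (y i) := by
  classical
  simp [linearForm, pderiv_X, Pi.single_apply]

theorem pderiv_sumSq (i : ι) : pderiv i (sumSq : MvPolynomial ι ℝ) = C 2 * X i := by
  classical
  simp [sumSq, pderiv_X, Pi.single_apply, map_ofNat]

theorem laplacian_zonal (hν : Fintype.card ι = 2 * ν + 2) : laplacian (zonal ν y k) = 0 := by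
  refine sum_derivation_derivation_gegenbauer (D := pderiv) (c := C (y ⬝ᵥ y)) ν k ?_ ?_ ?_ ?_ ?_
  all_goals simp only [pderiv_linearForm, pderiv_C_mul, pderiv_sumSq, pderiv_C]
  · simp [dotProduct, pow_two]
  · simp only [linearForm, Finset.mul_sum, map_ofNat]
    exact Finset.sum_congr rfl fun i _ => by ring
  · simp only [sumSq, Finset.mul_sum, map_ofNat]
    exact Finset.sum_congr rfl fun i _ => by ring
  · simp
  · simp only [pderiv_X_self, Finset.sum_const, Finset.card_univ, hν, nsmul_eq_mul, map_ofNat]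
    push_cast
    ring

theorem fischer_zonal_zonal (hν : Fintype.card ι = 2 * ν + 2) (x : ι → ℝ) :
    fischer (zonal ν x k) (zonal ν y k) =
      gegenbauer ν 1 0 k * k ! * gegenbauer ν (x ⬝ᵥ y) ((x ⬝ᵥ x) * (y ⬝ᵥ y)) k := by
  obtain ⟨r, hr⟩ := sumSq_dvd_zonal_sub ν x k
  rw [sub_eq_iff_eq_add'.1 hr, map_add, LinearMap.add_apply, fischer_sumSq_mul,
    laplacian_zonal ν y k hν, map_zero, add_zero, mul_comm, C_mul', map_smul, LinearMap.smul_apply,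
    fischer_linearForm_pow x (isHomogeneous_zonal ν y k), eval_zonal, dotProduct_comm y x,
    mul_comm (y ⬝ᵥ y), smul_eq_mul, mul_assoc]

theorem sum_gegenbauer_dotProduct_nonneg {α : Type*} (s : Finset α) (p : α → ι → ℝ) (c : α → ℝ)
    (hν₀ : ν ≠ 0) (hν : Fintype.card ι = 2 * ν + 2) :
    0 ≤ ∑ a ∈ s, ∑ b ∈ s, c a * c b *
      gegenbauer ν (p a ⬝ᵥ p b) ((p a ⬝ᵥ p a) * (p b ⬝ᵥ p b)) k := by
  have scale_pos : 0 < gegenbauer ν (1 : ℝ) 0 k * k ! :=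
    mul_pos (gegenbauer_one_zero_pos k hν₀) (by positivity)
  refine nonneg_of_mul_nonneg_right ?_ scale_pos
  refine (fischer_self_nonneg (∑ a ∈ s, c a • zonal ν (p a) k)).trans_eq ?_
  simp only [map_sum, map_smul, LinearMap.sum_apply, LinearMap.smul_apply, smul_eq_mul,
    fischer_zonal_zonal ν _ k hν, Finset.mul_sum]
  rw [Finset.sum_comm]
  exact Finset.sum_congr rfl fun a _ => Finset.sum_congr rfl fun b _ => by ring

end Zonal

theorem sum_gegenbauer_inner_nonneg {E α : Type*} [NormedAddCommGroup E] [InnerProductSpace ℝ E]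
    {ν : ℕ} (hν₀ : ν ≠ 0) (hν : Module.finrank ℝ E = 2 * ν + 2) (s : Finset α) (p : α → E)
    (c : α → ℝ) (k : ℕ) :
    0 ≤ ∑ a ∈ s, ∑ b ∈ s, c a * c b *
      gegenbauer ν (inner ℝ (p a) (p b)) (‖p a‖ ^ 2 * ‖p b‖ ^ 2) k := by
  have : FiniteDimensional ℝ E := Module.finite_of_finrank_pos (by omega)
  let e := (stdOrthonormalBasis ℝ E).repr
  have inner_eq (x y : E) : inner ℝ x y = (e x).ofLp ⬝ᵥ (e y).ofLp := by
    rw [← e.inner_map_map, EuclideanSpace.inner_eq_star_dotProduct, star_trivial, dotProduct_comm]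
  simp only [← real_inner_self_eq_norm_sq, inner_eq]
  exact sum_gegenbauer_dotProduct_nonneg ν k s (fun a => (e (p a)).ofLp) c hν₀ (by simpa using hν)

/-! ### Sums over triples of distinct elements -/

section TripleSum

variable {α : Type*} [DecidableEq α]

/-- The sum of `f x y z` over all ordered triples of distinct elements of `S`. -/
def tripleSum (S : Finset α) (f : α → α → α → ℝ) : ℝ :=
  ∑ x ∈ S, ∑ y ∈ S.erase x, ∑ z ∈ (S.erase x).erase y, f x y z

theorem sum_sum_erase_comm (S : Finset α) (g : α → α → ℝ) :
    ∑ x ∈ S, ∑ y ∈ S.erase x, g x y = ∑ x ∈ S, ∑ y ∈ S.erase x, g y x :=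
  Finset.sum_comm' fun x y => by simp only [Finset.mem_erase]; tauto

theorem tripleSum_rotate (S : Finset α) (f : α → α → α → ℝ) :
    tripleSum S (fun x y z => f y z x) = tripleSum S f := by
  calc tripleSum S (fun x y z => f y z x)
      = tripleSum S (fun x y z => f z y x) :=
        Finset.sum_congr rfl fun x _ => sum_sum_erase_comm (S.erase x) fun y z => f y z x
    _ = tripleSum S (fun x y z => f z x y) := by
        simp only [tripleSum]
        rw [sum_sum_erase_comm]
        simp only [Finset.erase_right_comm]
    _ = tripleSum S (fun x y z => f y x z) :=
        Finset.sum_congr rfl fun x _ => sum_sum_erase_comm (S.erase x) fun y z => f z x y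
    _ = tripleSum S f := by
        simp only [tripleSum]
        rw [sum_sum_erase_comm]
        simp only [Finset.erase_right_comm]

theorem tripleSum_add (S : Finset α) (f g : α → α → α → ℝ) :
    tripleSum S (fun x y z => f x y z + g x y z) = tripleSum S f + tripleSum S g := by
  simp only [tripleSum, Finset.sum_add_distrib]

theorem tripleSum_mul_add (S : Finset α) (f : α → α → α → ℝ) (g : α → α → ℝ) :
    tripleSum S (fun x y z => (S.card - 2) * f x y z + g x y) =
      (S.card - 2) * (tripleSum S f + ∑ x ∈ S, ∑ y ∈ S.erase x, g x y) := by
  simp only [tripleSum, Finset.sum_add_distrib, Finset.sum_const, nsmul_eq_mul, mul_add,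
    Finset.mul_sum]
  congr 1
  refine Finset.sum_congr rfl fun x hx => Finset.sum_congr rfl fun y hy => ?_
  rw [Finset.cast_card_erase_of_mem hy, Finset.cast_card_erase_of_mem hx]
  ring

theorem tripleSum_neg {S : Finset α} (hS : 2 < S.card) {f : α → α → α → ℝ}
    (hf : ∀ x ∈ S, ∀ y ∈ S, ∀ z ∈ S, x ≠ y → y ≠ z → z ≠ x → f x y z < 0) :
    tripleSum S f < 0 := by
  refine Finset.sum_neg (fun x hx => Finset.sum_neg (fun y hy => Finset.sum_neg
    (fun z hz => ?_) ?_) ?_) (Finset.card_pos.1 (by lia))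
  · simp only [Finset.mem_erase] at hy hz
    exact hf x hx y hy.2 z hz.2.2 hy.1.symm hz.1.symm hz.2.1
  · apply Finset.card_pos.1
    rw [Finset.card_erase_of_mem hy, Finset.card_erase_of_mem hx]
    lia
  · apply Finset.card_pos.1
    rw [Finset.card_erase_of_mem hx]
    lia

theorem sum_sum_sum_erase_eq_tripleSum_add (S : Finset α) (A : α → α → α → ℝ) :
    ∑ z ∈ S, ∑ x ∈ S.erase z, ∑ y ∈ S.erase z, A x y z =
      tripleSum S A + ∑ x ∈ S, ∑ y ∈ S.erase x, A x x y := by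
  rw [← tripleSum_rotate, tripleSum, sum_sum_erase_comm S (fun x y => A x x y),
    ← Finset.sum_add_distrib]
  refine Finset.sum_congr rfl fun z _ => ?_
  rw [← Finset.sum_add_distrib]
  exact Finset.sum_congr rfl fun x hx => (Finset.sum_erase_add _ _ hx).symm

/-- The averaging step of the three-point bound: a kernel that is positive semidefinite around each
`z ∈ S` is, after distributing its diagonal, nonnegative on average over distinct triples. -/
theorem exists_cyclic_sum_nonneg {S : Finset α} (hS : 2 < S.card) {A : α → α → α → ℝ}
    (hpos : ∀ z ∈ S, 0 ≤ ∑ x ∈ S.erase z, ∑ y ∈ S.erase z, A x y z) :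
    ∃ x ∈ S, ∃ y ∈ S, ∃ z ∈ S, x ≠ y ∧ y ≠ z ∧ z ≠ x ∧
      0 ≤ ((S.card - 2) * A x y z + A x x y) + ((S.card - 2) * A y z x + A y y z) +
        ((S.card - 2) * A z x y + A z z x) := by
  let F : α → α → α → ℝ := fun x y z => (S.card - 2) * A x y z + A x x y
  have hF : 0 ≤ tripleSum S F := by
    rw [tripleSum_mul_add, ← sum_sum_sum_erase_eq_tripleSum_add]
    exact mul_nonneg (sub_nonneg.2 (mod_cast hS.le)) (Finset.sum_nonneg hpos)
  have hcyclic : tripleSum S (fun x y z => F x y z + F y z x + F z x y) = 3 * tripleSum S F := by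
    rw [tripleSum_add, tripleSum_add, tripleSum_rotate, tripleSum_rotate S fun x y z => F y z x,
      tripleSum_rotate]
    ring
  by_contra! hneg
  exact (tripleSum_neg hS hneg).not_ge (hcyclic ▸ by positivity)

end TripleSum

/-! ### Coefficient norms by Kronecker substitution -/

/-- The `ℓ¹` norm of the coefficient vector of an integer polynomial. -/
noncomputable def coeffNorm {σ : Type*} (p : MvPolynomial σ ℤ) : ℕ :=
  ∑ m ∈ p.support, (p.coeff m).natAbs

section CoeffNorm

open MvPolynomial

variable {σ : Type*}

theorem coeffNorm_eq_sum_of_support_subset {p : MvPolynomial σ ℤ} {T : Finset (σ →₀ ℕ)}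
    (h : p.support ⊆ T) : coeffNorm p = ∑ m ∈ T, (p.coeff m).natAbs :=
  Finset.sum_subset h fun m _ hm => by rw [notMem_support_iff.1 hm, Int.natAbs_zero]

theorem coeffNorm_add_le (p q : MvPolynomial σ ℤ) :
    coeffNorm (p + q) ≤ coeffNorm p + coeffNorm q := by
  classical
  rw [coeffNorm_eq_sum_of_support_subset (p := p + q) support_add,
    coeffNorm_eq_sum_of_support_subset (p := p) (Finset.subset_union_left (s₂ := q.support)),
    coeffNorm_eq_sum_of_support_subset (p := q) (Finset.subset_union_right (s₁ := p.support)),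
    ← Finset.sum_add_distrib]
  exact Finset.sum_le_sum fun m _ => by rw [coeff_add]; exact Int.natAbs_add_le _ _

theorem coeffNorm_neg (p : MvPolynomial σ ℤ) : coeffNorm (-p) = coeffNorm p := by
  simp [coeffNorm]

theorem coeffNorm_sum_le {ι : Type*} (s : Finset ι) (f : ι → MvPolynomial σ ℤ) :
    coeffNorm (∑ i ∈ s, f i) ≤ ∑ i ∈ s, coeffNorm (f i) :=
  Finset.le_sum_of_subadditive _ (by simp [coeffNorm]) coeffNorm_add_le _ _

theorem coeffNorm_monomial (m : σ →₀ ℕ) (a : ℤ) : coeffNorm (monomial m a) = a.natAbs := by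
  classical
  rw [coeffNorm_eq_sum_of_support_subset support_monomial_subset, Finset.sum_singleton,
    coeff_monomial, if_pos rfl]

theorem coeffNorm_intCast (a : ℤ) : coeffNorm (a : MvPolynomial σ ℤ) = a.natAbs := by
  rw [← eq_intCast C a, C_apply, coeffNorm_monomial]

theorem coeffNorm_mul_le (p q : MvPolynomial σ ℤ) :
    coeffNorm (p * q) ≤ coeffNorm p * coeffNorm q := by
  have expand : p * q = ∑ m ∈ p.support, ∑ m' ∈ q.support,
      monomial (m + m') (p.coeff m * q.coeff m') := by
    conv_lhs => rw [p.as_sum, q.as_sum, Finset.sum_mul_sum]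
    simp only [monomial_mul]
  calc coeffNorm (p * q)
      ≤ ∑ m ∈ p.support, ∑ m' ∈ q.support,
          coeffNorm (monomial (m + m') (p.coeff m * q.coeff m')) := by
        rw [expand]
        exact (coeffNorm_sum_le _ _).trans (Finset.sum_le_sum fun _ _ => coeffNorm_sum_le _ _)
    _ = coeffNorm p * coeffNorm q := by
        simp only [coeffNorm_monomial, Int.natAbs_mul]
        exact (Finset.sum_mul_sum ..).symm

theorem coeffNorm_pow_le (p : MvPolynomial σ ℤ) (n : ℕ) :
    coeffNorm (p ^ n) ≤ coeffNorm p ^ n := by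
  induction n with
  | zero => rw [pow_zero, pow_zero, ← Int.cast_one, coeffNorm_intCast, Int.natAbs_one]
  | succ n ih =>
    rw [pow_succ, pow_succ]
    exact (coeffNorm_mul_le _ _).trans (Nat.mul_le_mul_right _ ih)

theorem abs_aeval_le_coeffNorm (p : MvPolynomial σ ℤ) {x : σ → ℝ}
    (hx : ∀ i, |x i| ≤ 1) : |aeval x p| ≤ coeffNorm p := by
  rw [aeval_def, eval₂_eq, coeffNorm, Nat.cast_sum]
  refine (Finset.abs_sum_le_sum_abs _ _).trans (Finset.sum_le_sum fun m _ => ?_)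
  rw [abs_mul, Finset.abs_prod, eq_intCast, Nat.cast_natAbs, Int.cast_abs]
  refine mul_le_of_le_one_right (abs_nonneg _) (Finset.prod_le_one (fun i _ => abs_nonneg _) ?_)
  exact fun i _ => by rw [abs_pow]; exact pow_le_one₀ (abs_nonneg _) (hx i)

end CoeffNorm

/-- `f n`, where the kernel reduces `n` to a literal before it unfolds `f`; without this the
arguments of nested computations pile up unevaluated. -/
def force {α : Type*} (n : ℕ) (f : ℕ → α) : α :=
  match n with
  | 0 => f 0
  | m + 1 => f (m + 1)

theorem force_eq {α : Type*} (n : ℕ) (f : ℕ → α) : force n f = f n := by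
  cases n <;> rfl

/-- The analogue of `force` for integers. -/
def forceInt {α : Type*} (a : ℤ) (f : ℤ → α) : α :=
  match a with
  | .ofNat n => force n fun n => f (.ofNat n)
  | .negSucc n => force n fun n => f (.negSucc n)

theorem forceInt_eq {α : Type*} (a : ℤ) (f : ℤ → α) : forceInt a f = f a := by
  cases a <;> simp only [forceInt, force_eq]

/-- The sum of `|d - h|` over the `2 ^ n` lowest digits `d` of `N` in the odd base `2 * h + 1`,
computed by bisection. -/
def digitDeviation (h : ℕ) : ℕ → ℕ → ℕ
  | 0, N => Nat.dist N h
  | n + 1, N => force N fun N =>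
      digitDeviation h n (N % (2 * h + 1) ^ 2 ^ n) + digitDeviation h n (N / (2 * h + 1) ^ 2 ^ n)

section Digits

variable {h : ℕ}

theorem sum_mul_pow_lt_pow {b : ℕ} {d : ℕ → ℕ} (hd : ∀ i, d i < b) (n : ℕ) :
    ∑ i ∈ Finset.range n, d i * b ^ i < b ^ n := by
  induction n with
  | zero => simp
  | succ n ih =>
    calc ∑ i ∈ Finset.range (n + 1), d i * b ^ i
        < b ^ n + d n * b ^ n := by rw [Finset.sum_range_succ]; gcongr
      _ = (d n + 1) * b ^ n := by ring
      _ ≤ b ^ (n + 1) := by rw [pow_succ']; gcongr; exact hd n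

theorem digitDeviation_sum (n : ℕ) {d : ℕ → ℕ} (hd : ∀ i, d i < 2 * h + 1) :
    digitDeviation h n (∑ i ∈ Finset.range (2 ^ n), d i * (2 * h + 1) ^ i) =
      ∑ i ∈ Finset.range (2 ^ n), Nat.dist (d i) h := by
  induction n generalizing d with
  | zero => simp [digitDeviation]
  | succ n ih =>
    have split : ∑ i ∈ Finset.range (2 ^ (n + 1)), d i * (2 * h + 1) ^ i =
        ∑ i ∈ Finset.range (2 ^ n), d i * (2 * h + 1) ^ i +
          (2 * h + 1) ^ 2 ^ n * ∑ i ∈ Finset.range (2 ^ n), d (2 ^ n + i) * (2 * h + 1) ^ i := by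
      rw [pow_succ, mul_two, Finset.sum_range_add, Finset.mul_sum]
      simp only [pow_add, mul_left_comm]
    have low_lt := sum_mul_pow_lt_pow hd (2 ^ n)
    rw [digitDeviation, force_eq, split, Nat.add_mul_mod_self_left, Nat.mod_eq_of_lt low_lt,
      Nat.add_mul_div_left _ _ (by positivity), Nat.div_eq_of_lt low_lt, zero_add, ih hd,
      ih fun i => hd _, pow_succ, mul_two, Finset.sum_range_add]

theorem pow_half_eq_sum (h n : ℕ) :
    (2 * h + 1) ^ n / 2 = ∑ i ∈ Finset.range n, h * (2 * h + 1) ^ i := by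
  have geom := geom_sum_mul_add (2 * h) n
  rw [← Finset.mul_sum]
  nlinarith [Nat.div_add_mod ((2 * h + 1) ^ n) 2, Nat.odd_iff.1 (Odd.pow (n := n) ⟨h, rfl⟩)]

theorem digitDeviation_balanced (n : ℕ) {c : ℕ → ℤ} (hc : ∀ i, (c i).natAbs ≤ h) :
    digitDeviation h n (∑ i ∈ Finset.range (2 ^ n), c i * (2 * h + 1 : ℕ) ^ i +
      ((2 * h + 1) ^ 2 ^ n / 2 : ℕ)).toNat = ∑ i ∈ Finset.range (2 ^ n), (c i).natAbs := by
  have digit_cast (i : ℕ) : ((c i + h).toNat : ℤ) = c i + h := by have := hc i; omega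
  have shifted : ∑ i ∈ Finset.range (2 ^ n), c i * (2 * h + 1 : ℕ) ^ i +
      ((2 * h + 1) ^ 2 ^ n / 2 : ℕ) =
        ((∑ i ∈ Finset.range (2 ^ n), (c i + h).toNat * (2 * h + 1) ^ i : ℕ) : ℤ) := by
    rw [pow_half_eq_sum]
    simp only [Nat.cast_sum, Nat.cast_mul, Nat.cast_pow, digit_cast, add_mul,
      Finset.sum_add_distrib]
  rw [shifted, Int.toNat_natCast, digitDeviation_sum n fun i => by have := hc i; omega]
  exact Finset.sum_congr rfl fun i _ => by
    have := hc i
    rw [Nat.dist]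
    omega

end Digits

section Kronecker

open MvPolynomial

variable {d : ℕ}

/-- The exponent of the monomial `m` under the Kronecker substitution `Xᵢ ↦ X ^ (r ^ i)`. -/
def kroneckerWeight (r : ℕ) (m : Fin d →₀ ℕ) : ℕ := ∑ i, m i * r ^ (i : ℕ)

theorem aeval_pow_pow_eq_sum (b : ℤ) (r : ℕ) (p : MvPolynomial (Fin d) ℤ) :
    aeval (fun i : Fin d => b ^ r ^ (i : ℕ)) p =
      ∑ m ∈ p.support, p.coeff m * b ^ kroneckerWeight r m := by
  simp only [aeval_def, eval₂_eq', kroneckerWeight, ← Finset.prod_pow_eq_pow_sum, pow_mul,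
    pow_right_comm, algebraMap_int_eq, eq_intCast, Int.cast_id]

theorem lt_of_mem_support {p : MvPolynomial (Fin d) ℤ} {r : ℕ} (hp : p.totalDegree < r)
    {m : Fin d →₀ ℕ} (hm : m ∈ p.support) (i : Fin d) : m i < r :=
  (((monomial_le_degreeOf i hm).trans (degreeOf_le_totalDegree p i))).trans_lt hp

theorem kroneckerWeight_eq {r : ℕ} {m : Fin d →₀ ℕ} (hm : ∀ i, m i < r) :
    kroneckerWeight r m = finFunctionFinEquiv fun i => (⟨m i, hm i⟩ : Fin r) := by
  rw [finFunctionFinEquiv_apply, kroneckerWeight]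

theorem kroneckerWeight_lt {r : ℕ} {m : Fin d →₀ ℕ} (hm : ∀ i, m i < r) :
    kroneckerWeight r m < r ^ d := by
  rw [kroneckerWeight_eq hm]; exact Fin.is_lt _

theorem kroneckerWeight_inj {r : ℕ} {m m' : Fin d →₀ ℕ} (hm : ∀ i, m i < r)
    (hm' : ∀ i, m' i < r) (heq : kroneckerWeight r m = kroneckerWeight r m') : m = m' := by
  rw [kroneckerWeight_eq hm, kroneckerWeight_eq hm', Fin.val_inj,
    EmbeddingLike.apply_eq_iff_eq] at heq
  ext i
  simpa using congrFun heq i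

theorem natAbs_sum_filter_eq_of_injOn {α : Type*} {s : Finset α} {w : α → ℕ} (hw : Set.InjOn w s)
    (f : α → ℤ) (i : ℕ) :
    (∑ a ∈ s with w a = i, f a).natAbs = ∑ a ∈ s with w a = i, (f a).natAbs := by
  have fiber_subsingleton : (↑{a ∈ s | w a = i} : Set α).Subsingleton := fun a ha a' ha' => by
    rw [Finset.mem_coe, Finset.mem_filter] at ha ha'
    exact hw ha.1 ha'.1 (ha.2.trans ha'.2.symm)
  obtain hempty | ⟨a, ha⟩ := fiber_subsingleton.eq_empty_or_singleton
  · rw [Finset.coe_eq_empty.1 hempty, Finset.sum_empty, Finset.sum_empty, Int.natAbs_zero]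
  · rw [Finset.coe_eq_singleton.1 ha, Finset.sum_singleton, Finset.sum_singleton]

/-- The digits of the Kronecker value of `p` are its coefficients, so they can be read off once
they are known to be small. -/
theorem coeffNorm_eq_digitDeviation {p : MvPolynomial (Fin d) ℤ} {h r n : ℕ}
    (hdeg : p.totalDegree < r) (hnorm : coeffNorm p ≤ h) (hn : r ^ d ≤ 2 ^ n) :
    coeffNorm p = digitDeviation h n
      (aeval (fun i : Fin d => ((2 * h + 1 : ℕ) : ℤ) ^ r ^ (i : ℕ)) p +
        ((2 * h + 1) ^ 2 ^ n / 2 : ℕ)).toNat := by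
  classical
  let c (i : ℕ) : ℤ := ∑ m ∈ p.support with kroneckerWeight r m = i, p.coeff m
  have hc (i : ℕ) : (c i).natAbs ≤ h :=
    ((Int.natAbs_sum_le _ _).trans
      (Finset.sum_le_sum_of_subset (Finset.filter_subset _ _))).trans hnorm
  have weight_lt : ∀ m ∈ p.support, kroneckerWeight r m ∈ Finset.range (2 ^ n) := fun m hm =>
    Finset.mem_range.2 ((kroneckerWeight_lt (lt_of_mem_support hdeg hm)).trans_le hn)
  have weight_injOn : Set.InjOn (kroneckerWeight r) (p.support : Set (Fin d →₀ ℕ)) :=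
    fun m hm m' hm' => kroneckerWeight_inj (lt_of_mem_support hdeg hm)
      (lt_of_mem_support hdeg hm')
  have value_eq : aeval (fun i : Fin d => ((2 * h + 1 : ℕ) : ℤ) ^ r ^ (i : ℕ)) p =
      ∑ i ∈ Finset.range (2 ^ n), c i * (2 * h + 1 : ℕ) ^ i := by
    rw [aeval_pow_pow_eq_sum, ← Finset.sum_fiberwise_of_maps_to weight_lt]
    refine Finset.sum_congr rfl fun i _ => ?_
    rw [Finset.sum_mul]
    exact Finset.sum_congr rfl fun m hm => by rw [(Finset.mem_filter.1 hm).2]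
  rw [value_eq, digitDeviation_balanced n hc, coeffNorm,
    ← Finset.sum_fiberwise_of_maps_to weight_lt]
  exact Finset.sum_congr rfl fun i _ =>
    (natAbs_sum_filter_eq_of_injOn weight_injOn p.coeff i).symm

end Kronecker

/-- Syntactic integer polynomials in `d` variables, for evaluation inside the kernel. -/
inductive PolyExpr (d : ℕ) where
  | const (a : ℤ)
  | var (i : Fin d)
  | add (p q : PolyExpr d)
  | sub (p q : PolyExpr d)
  | mul (p q : PolyExpr d)
  | pow (p : PolyExpr d) (n : ℕ)

namespace PolyExpr

variable {d : ℕ}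

instance : IntCast (PolyExpr d) := ⟨const⟩
instance : Zero (PolyExpr d) := ⟨const 0⟩
instance : One (PolyExpr d) := ⟨const 1⟩
instance : Add (PolyExpr d) := ⟨add⟩
instance : Sub (PolyExpr d) := ⟨sub⟩
instance : Mul (PolyExpr d) := ⟨mul⟩
instance : Pow (PolyExpr d) ℕ := ⟨pow⟩

/-- The value of an expression in a commutative ring. -/
def eval {R : Type*} [CommRing R] (x : Fin d → R) : PolyExpr d → R
  | const a => a
  | var i => x i
  | add p q => p.eval x + q.eval x
  | sub p q => p.eval x - q.eval x
  | mul p q => p.eval x * q.eval x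
  | pow p n => p.eval x ^ n

/-- A bound for the total degree of the polynomial denoted by an expression. -/
def degreeBound : PolyExpr d → ℕ
  | const _ => 0
  | var _ => 1
  | add p q => max p.degreeBound q.degreeBound
  | sub p q => max p.degreeBound q.degreeBound
  | mul p q => p.degreeBound + q.degreeBound
  | pow p n => n * p.degreeBound

/-- A bound for `coeffNorm` of the polynomial denoted by an expression. -/
def normBound : PolyExpr d → ℕ
  | const a => a.natAbs
  | var _ => 1
  | add p q => p.normBound + q.normBound
  | sub p q => p.normBound + q.normBound
  | mul p q => p.normBound * q.normBound
  | pow p n => p.normBound ^ n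

/-- The value of an expression at `Xᵢ = (2 * h + 1) ^ (r ^ i)`, arranged so that the kernel can
evaluate it. -/
def kroneckerValue (h r : ℕ) : PolyExpr d → ℤ
  | const a => a
  | var i => ((2 * h + 1) ^ r ^ (i : ℕ) : ℕ)
  | add p q => forceInt (p.kroneckerValue h r) fun a => forceInt (q.kroneckerValue h r) fun b =>
      a + b
  | sub p q => forceInt (p.kroneckerValue h r) fun a => forceInt (q.kroneckerValue h r) fun b =>
      a - b
  | mul p q => forceInt (p.kroneckerValue h r) fun a => forceInt (q.kroneckerValue h r) fun b =>
      a * b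
  | pow p n => forceInt (p.kroneckerValue h r) fun a => a ^ n

/-- The polynomial denoted by an expression. -/
noncomputable def toMvPolynomial (p : PolyExpr d) : MvPolynomial (Fin d) ℤ :=
  p.eval MvPolynomial.X

section Eval

variable {R : Type*} [CommRing R] (x : Fin d → R)

@[simp] theorem eval_intCast (a : ℤ) : (a : PolyExpr d).eval x = a := rfl

@[simp] theorem eval_zero : (0 : PolyExpr d).eval x = 0 := Int.cast_zero

@[simp] theorem eval_one : (1 : PolyExpr d).eval x = 1 := Int.cast_one

@[simp] theorem eval_var (i : Fin d) : (var i).eval x = x i := rfl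

@[simp] theorem eval_add (p q : PolyExpr d) : (p + q).eval x = p.eval x + q.eval x := rfl

@[simp] theorem eval_sub (p q : PolyExpr d) : (p - q).eval x = p.eval x - q.eval x := rfl

@[simp] theorem eval_mul (p q : PolyExpr d) : (p * q).eval x = p.eval x * q.eval x := rfl

@[simp] theorem eval_pow (p : PolyExpr d) (n : ℕ) : (p ^ n).eval x = p.eval x ^ n := rfl

@[simp] theorem eval_list_sum (l : List (PolyExpr d)) :
    l.sum.eval x = (l.map (eval x)).sum := by
  induction l with
  | nil => exact eval_zero x
  | cons p l ih => rw [List.sum_cons, eval_add, ih, List.map_cons, List.sum_cons]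

end Eval

theorem map_eval {R R' : Type*} [CommRing R] [CommRing R'] (f : R →+* R') (x : Fin d → R)
    (p : PolyExpr d) : f (p.eval x) = p.eval fun i => f (x i) := by
  induction p with
  | const a => exact map_intCast f a
  | var i => rfl
  | add p q hp hq => simp only [eval, map_add, hp, hq]
  | sub p q hp hq => simp only [eval, map_sub, hp, hq]
  | mul p q hp hq => simp only [eval, map_mul, hp, hq]
  | pow p n hp => simp only [eval, map_pow, hp]

theorem aeval_toMvPolynomial {R : Type*} [CommRing R] (x : Fin d → R) (p : PolyExpr d) :
    MvPolynomial.aeval x p.toMvPolynomial = p.eval x := by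
  simpa [toMvPolynomial] using
    map_eval (MvPolynomial.aeval (R := ℤ) x).toRingHom MvPolynomial.X p

theorem kroneckerValue_eq_eval (h r : ℕ) (p : PolyExpr d) :
    p.kroneckerValue h r = p.eval fun i => ((2 * h + 1 : ℕ) : ℤ) ^ r ^ (i : ℕ) := by
  induction p with
  | const a => rw [kroneckerValue, eval, Int.cast_id]
  | var i => rw [kroneckerValue, eval, Nat.cast_pow]
  | add p q hp hq | sub p q hp hq | mul p q hp hq =>
    rw [kroneckerValue, forceInt_eq, forceInt_eq, hp, hq, eval]
  | pow p n hp => rw [kroneckerValue, forceInt_eq, hp, eval]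

theorem totalDegree_le_degreeBound (p : PolyExpr d) :
    p.toMvPolynomial.totalDegree ≤ p.degreeBound := by
  rw [toMvPolynomial]
  induction p with
  | const a => rw [eval, ← eq_intCast MvPolynomial.C a, MvPolynomial.totalDegree_C, degreeBound]
  | var i => exact (MvPolynomial.totalDegree_X i).le
  | add p q hp hq => exact (MvPolynomial.totalDegree_add _ _).trans (max_le_max hp hq)
  | sub p q hp hq => exact (MvPolynomial.totalDegree_sub _ _).trans (max_le_max hp hq)
  | mul p q hp hq => exact (MvPolynomial.totalDegree_mul _ _).trans (Nat.add_le_add hp hq)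
  | pow p n hp => exact (MvPolynomial.totalDegree_pow _ _).trans (Nat.mul_le_mul_left n hp)

theorem coeffNorm_le_normBound (p : PolyExpr d) : coeffNorm p.toMvPolynomial ≤ p.normBound := by
  rw [toMvPolynomial]
  induction p with
  | const a => exact (coeffNorm_intCast a).le
  | var i => exact (coeffNorm_monomial _ _).le
  | add p q hp hq => exact (coeffNorm_add_le _ _).trans (Nat.add_le_add hp hq)
  | sub p q hp hq =>
    rw [eval, sub_eq_add_neg]
    exact (coeffNorm_add_le _ _).trans (Nat.add_le_add hp (by rwa [coeffNorm_neg]))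
  | mul p q hp hq => exact (coeffNorm_mul_le _ _).trans (Nat.mul_le_mul hp hq)
  | pow p n hp => exact (coeffNorm_pow_le _ _).trans (Nat.pow_le_pow_left hp n)

theorem abs_eval_le (p : PolyExpr d) {h r n : ℕ} (hdeg : p.degreeBound < r)
    (hnorm : p.normBound ≤ h) (hn : r ^ d ≤ 2 ^ n) {x : Fin d → ℝ} (hx : ∀ i, |x i| ≤ 1) :
    |p.eval x| ≤
      digitDeviation h n (p.kroneckerValue h r + ((2 * h + 1) ^ 2 ^ n / 2 : ℕ)).toNat := by
  rw [kroneckerValue_eq_eval, ← aeval_toMvPolynomial, ← aeval_toMvPolynomial,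
    ← coeffNorm_eq_digitDeviation (p.totalDegree_le_degreeBound.trans_lt hdeg)
      (p.coeffNorm_le_normBound.trans hnorm) hn]
  exact abs_aeval_le_coeffNorm _ hx

end PolyExpr

/-! ### The certificate -/

section Certificate

variable {A : Type*}

/-- The value at `x` of the polynomial with the given coefficients, constant term first. -/
def horner [Zero A] [Add A] [Mul A] [IntCast A] (x : A) : List ℤ → A
  | [] => 0
  | a :: l => a + x * horner x l

/-- `4 * ⟪p, q⟫` as a function of the normalised inner product `t = (4 * ⟪p, q⟫ + 1) / 3`, which
ranges over `[-1, 1]` when `p` and `q` are unit vectors at distance at least `1`. -/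
def fourInner [Sub A] [Mul A] [IntCast A] (t : A) : A := (3 : ℤ) * t - (1 : ℤ)

/-- `16` times the squared length of the projection of `p` to the hyperplane orthogonal to `q`. -/
def projNormSq [Sub A] [Mul A] [Pow A ℕ] [IntCast A] (t : A) : A := (16 : ℤ) - fourInner t ^ 2

/-- `16` times the inner product of the projections of `p` and `q` to the hyperplane orthogonal to
`r`; the arguments are the normalised inner products of `p, q`, of `q, r` and of `r, p`. -/
def projInner [Sub A] [Mul A] [IntCast A] (t u v : A) : A :=
  (4 : ℤ) * fourInner t - fourInner u * fourInner v

/-- `32` times the Gram determinant of three unit vectors. -/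
def gramDet [Add A] [Sub A] [Mul A] [Pow A ℕ] [IntCast A] (t u v : A) : A :=
  (32 : ℤ) + fourInner t * fourInner u * fourInner v -
    (2 : ℤ) * (fourInner t ^ 2 + fourInner u ^ 2 + fourInner v ^ 2)

/-- The Bachoc–Vallentin kernel: the `k`-th entry of `G` is a list of polynomials `h`, which stands
for the positive semidefinite form `∑ h, h(u) * h(v)`. -/
def threePointKernel [Zero A] [One A] [Add A] [Sub A] [Mul A] [Pow A ℕ] [IntCast A]
    (G : List (List (List ℤ))) (t u v : A) : A :=
  (G.zipIdx.map fun H => gegenbauer 2 (projInner t u v) (projNormSq u * projNormSq v) H.2 *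
    (H.1.map fun h => horner u h * horner v h).sum).sum

/-- The value of `threePointKernel` at two equal points. -/
def diagonalKernel [Zero A] [Add A] [Sub A] [Mul A] [Pow A ℕ] [IntCast A]
    (G : List (List (List ℤ))) (u : A) : A :=
  (G.zipIdx.map fun H => ((gegenbauer 2 (1 : ℤ) 1 H.2 : ℤ) : A) * projNormSq u ^ H.2 *
    (H.1.map fun h => horner u h ^ 2).sum).sum

/-- The polynomial `∑ k j, P_{k,j}(t) * (u * v) ^ k * (u ^ (o + j) + ε * v ^ (o + j))`. -/
def twistedPoly [Zero A] [Add A] [Mul A] [Pow A ℕ] [IntCast A]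
    (ε : ℤ) (o : ℕ) (t u v : A) (P : List (List (List ℤ))) : A :=
  (P.zipIdx.map fun R => (u * v) ^ R.2 *
    ((R.1.zipIdx o).map fun h => horner t h.1 * (u ^ h.2 + ε * v ^ h.2)).sum).sum

/-- The sum of squares of a list of polynomials encoded as in `twistedPoly`. -/
def twistedSumSq [Zero A] [Add A] [Mul A] [Pow A ℕ] [IntCast A]
    (ε : ℤ) (o : ℕ) (Ps : List (List (List (List ℤ)))) (t u v : A) : A :=
  (Ps.map fun P => twistedPoly ε o t u v P ^ 2).sum

/-- The polynomials defining the three-point kernel of the dual solution; with the other three lists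
below, a rounded numerical solution of the semidefinite program of the three-point bound. -/
def kernelCoeffs : List (List (List ℤ)) :=
  [[[-4577462848810, -14586861516264, 86605558230380, 146539978167426, -168359303811901,
     307513461881516, -1136502491687721, -119173905980286, 2495754513938404, -971400893128038,
     -1561531958279699, 950294678886900],
    [645015770017, -58712347183511, 79350893873396, 40617459637219, -529533244656000,
     302601183254466, 1587543541867930, -1077872084093881, -1878245867780098,
     1303979923242895, 729638069610053, -497489145595886],
    [227783241185, -40123130432966, -48626399703312, 90616860085419, 344049276428607,
     -28055663694679, -1068995464756544, 77550222111760, 1209449152069546, -230760199974665,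
     -423552235060419, 133450749344737],
    [-6791186594342, -1595587751406, 33136818122778, -44089030629847, -42076146682766,
     502320030692821, 153550847973764, -1491185809409127, -313761655741355, 1727843269236527,
     182509319453677, -689055775904988],
    [-194552865665, -4659262419425, -21276482466017, -10174358904150, 264841590244025,
     -52394280700367, -924440173410835, 802139560901607, 1229305512803287, -1564432501464802,
     -550623893718314, 834506257112608],
    [742581098724, 5307754601824, -19811622638758, -71071956066805, 151560277039274,
     547379575495119, -595181064639772, -1623737118147277, 902835383648966, 1903929711000712,
     -441603801024831, -760229189785781]],
   [[-56126067811, -1840751403899, -20905498871886, 68282075695468, -29020808853236,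
     11933501501567, -52279948096891, -132870044961170, 137738490384199, 163362494968217,
     -145260940339309],
    [-1492579261206, 9773866799484, -2349739067226, 6073138781390, 6306742548884,
     -50458851221061, 31275317738564, 45218873002903, -7027145695539, -7998951250212,
     -23657012965652],
    [2293198736848, -14166541487476, -4949608551424, 47822945107008, -35502399178673,
     -74740021285924, 99266272168639, 28347084105341, -29687057036373, 27680253018621,
     -40238314912545],
    [3216401041514, -699880669649, -11462167149841, 35611509195904, -38431501822205,
     -184388213287475, 229521557936282, 357929704916146, -409911140287065, -223646056593431,
     243231526846049],
    [-874918087701, -422306272591, 13148250918358, 45532533534975, -23741491660926,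
     -304909365137455, 150335164183380, 574583866761138, -391699368842248, -321754850434553,
     261323775992438],
    [-271069947506, 1635591892949, -3452277278779, 12365084387689, 41259830417967,
     -116966825675655, -147005930904234, 222030453052829, 188128523399066, -121441299478417,
     -76861370916424]],
   [[-591447939898, -321953702753, 10842306584831, -12914020900187, -4815463299408,
     5041805518762, 5219581398108, -3574510601141, 12805631840846, -10787180554888],
    [4823995449, 911377917045, 651736296662, 2713320052042, 12959329868477, -5767275684303,
     -46907462250782, 29129282002103, 39542297161347, -31435486009864],
    [1363762226980, -2311856691093, -2725759993852, 5018120398738, -5570021423076,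
     -2060487296167, 8189100070512, 5249166485671, -302722335846, -6320752939911],
    [317076637455, 1461252382144, -758053582815, 2808107828731, -3320519004129,
     -20732094821275, 10626955052022, 24850397086872, -5547713863469, -10497728146147],
    [-33293635592, 493228041921, 3368217482823, -5937728765375, -31016074957588,
     35257530301895, 78664327411948, -81844713622677, -56984892546254, 58267967901913],
    [-1181246190, -63674351427, 174810663713, -1725327736766, -407154306354, 11259673721017,
     1379593977343, -20217585632976, -1654633949976, 11276892745653]],
   [[61600724178, 659551318536, -1595949374763, 923685449498, 747007604489, -391547949701,
     -1036215007406, 3159823114052, -2294650537414],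
    [-115086806728, -108691263081, 1283563787808, 1294235875704, -2772308402992,
     -6115624322498, 6976280007499, 5132494132729, -5144760740822],
    [221764202737, -274817081292, 154996541153, 1528430127419, -3875943308812, -4270849420041,
     8337175865834, 4106916002354, -5829356493527],
    [4414062052, -48138461603, -495454291968, 1817222692465, 2989313974499, -7051266442474,
     -2969399647348, 6590226464064, -778205317293],
    [13194376116, -75993172100, -136959057266, 1850474304511, -1702452584624, -5630919892870,
     6104153147499, 3923118195768, -4321514674174]],
   [[30145938363, -51090538863, 81001857686, 171380288004, -27013294846, -213221733290,
     -590049572386, 616712168626],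
    [-18002763885, 117234011097, 41165436026, -662396455929, 275859641489, 898554505483,
     -726733461129, 146526949024],
    [-2916669668, -4038841440, 237682457731, -348186336676, -920107289515, 1172795206252,
     757347349022, -885368871412]],
   [[1957312641, 9037542868, -45640791366, 16583800867, 137156758222, -298094652468,
     182800048002],
    [-436564608, -6194202257, 34896803740, 69398408547, -156706964179, -100849990026,
     163218150025]],
   [[80046426, 4007461278, -1346324559, -23966163794, 41926949601, -19887935865]]]

/-- The sum-of-squares multiplier of `1 - t` in the dual solution: the squares of polynomials
symmetric in `u` and `v`. -/
def symmetricCoeffs : List (List (List (List ℤ))) :=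
  [[[[-2232468236744, 7291909536050, -23195406397522, 104671866025879, 141522999750482,
      -594854839765414, -97474978015467, 795160753715924, 590223804456595, -432239030112151,
      -451932848667325],
     [8033978074502, -14199876554532, 283034206640094, -247931090157249, -2025658435681883,
      2589906177596485, 516123149650091, -916807812454843, -239310891286897, 97819380756236],
     [82315741378970, -80606010522662, -368422593963898, -2150769467904933, 2370016152483050,
      -675313114641703, -709126807681979, -291988930070883, 622191032988432],
     [-209356586176155, -156904540126953, -286903406100249, 5011942188820867,
      -545325332550160, -6662554942060814, 200650207148393, 1179012914467925],
     [-79187214127878, 590767982600322, 2448789082927500, 4969224797565379, -1532152751041964,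
      -801112507120435, -624008917460794],
     [710395690267573, -305670178073359, 1805034803907451, -8729203455723653,
      4258424896207812, 5881241969197789],
     [-999531102233454, -962935837273504, -7023231233695960, 1988444253776833,
      -2787036953970277],
     [-857330093718256, 677644088505454, -31434797431157, -913845621884124],
     [2200657513730719, 13354186226242, 3249907621903514],
     [130761548474224, 217441641900488],
     [-983399441410714]],
    [[-36461940637353, 173725452322731, -268960610891221, -1557428691304866, 4978498697731007,
      -1817121609602758, -1306682882611456, -229719263820984, 235560743748089],
     [124455959050665, -259753533906627, -4812648689642331, 10263715235662286,
      -1239744039173572, -574697769524918, -4623337844282145, 331485037235334],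
     [576177128622728, -1617491513919196, 7276210851281555, -5348313659209568,
      -19860577641497539, 6437468560157709, 4901940290928885],
     [-84042126616400, 161373135673610, 6869273123948030, -14420355074380946,
      12309102627692713, -3135202912348312],
     [-2058164669128670, 3651552753575005, -12189288352860668, 18608741348370746,
      2051494124797452],
     [87957174297592, -627834420784586, 2902375224717589, -6189415819116172],
     [2722395942352217, -2711808533999013, 23103664683786],
     [-788628916061106, 1095670512182831],
     [-513119997922444]],
    [[-675409454269000, -283329295601830, 8406065710801515, -6585295819528805,
      -10208986677633389, 4671487863146322, 2713015474896058],
     [668572747922920, 5283142474425408, -13954070248936267, -15017048803660857,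
      33653026055248544, -6583811939690747],
     [2106996626685504, -4348072916815293, -4104646755539053, 25886145397273040,
      -13383073297907646],
     [-1429236154018918, -1357865269243577, 7784348733305657, -6691746177680578],
     [469745178912908, -955555411107448, -2109205871804656],
     [-973974014300435, 2388493031437244],
     [318099603282549]],
    [[-2243737789226077, -3074165397364845, 12069831402581516, 14024752346329358,
      -10118748854345592],
     [-3983676911915546, 19441227567037333, -16279351812166077, -11689248307019840],
     [10674559944511030, -19043559036871609, 767234232927723],
     [-2703712382608955, 2359267835690338],
     [-581149054410175]],
    [[2343968248983615, -16121210730494995, 7706957854851741],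
     [-5005316528709603, 15727613543218322],
     [2408880338491449]],
    [[-1419629851580434]]],
   [[[12823594044845, -22967933947588, -83340658997442, -102167322667461, 114878109000077,
      1036867461029978, 86859644231423, -1456926126704945, -160213536266050, 532682203265623,
      309860613161566],
     [-80562954301691, -46472772094353, 505720856685486, 963281117236325, 1170064987196642,
      -4612700394681212, -2525559763690624, 5644009019690100, -519965728026961,
      -602449650623715],
     [-202745978580538, 743274156246059, 1404821542703922, -1230439849265394,
      -6474433052064860, 199515569481071, 3575099689183424, -3396632200447293,
      389540098242080],
     [596684201323097, -25429665333554, -4628584636981168, -5183030959747385,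
      8639075561339717, 1315605928294770, -1269268743175969, 809853440391185],
     [394852851300599, -2526161700857295, -3212065362705978, 11194255428002576,
      -738826204650560, 4522239515481113, 56803016109279],
     [-1311027935975345, 888143467717251, 10252989079005560, -3025981496684714,
      -2367639522095009, -4047852064516552],
     [206030905786398, 2131245680490888, -5311478972237, -6393102158344927, -573853639600299],
     [694083919368654, -343750872977892, -3486181784617364, 4025149648807016],
     [-699188929784130, 514181435505833, -629591552027175],
     [203887421539833, -1297499341379894],
     [171279318490398]],
    [[96424888833133, 223033572293950, -700259059354714, -1133338857182200, -3321062072023278,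
      5960576378059908, 6709796032963837, -7076660781206396, -943660997015398],
     [554798606486181, -1292767851148928, -3114505041420002, -810018106216129,
      18582286267217622, -7437744092897878, -11474381854971266, 5779104980746623],
     [-1548351927250171, -500652804965829, 10108009127717380, 18499821050665760,
      -30718835574515831, 2849081579748526, 964074822824340],
     [-1076563595238124, 4608297776901295, 4387865456244638, -37007208429888811,
      19644382165802915, 1000134531991169],
     [3709622419763951, -3861445431203077, -30951060190133314, 16915288211437577,
      -451077775831423],
     [394685519086491, -4548066169109341, 13159202170155811, 3196984901299702],
     [-2610252268526755, 7976881164431848, 7005864583908766],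
     [608504104788624, -2800159694907389],
     [-141112270562913]],
    [[117174957568079, -1241869847085574, 1562622710127128, 10827190028607667,
      -11716044193086327, 6110049946430119, 4525592769940494],
     [-258497284547602, 6060742895961285, 1073453507373705, -22618013915938995,
      22598206562117169, -6766487984943419],
     [220525478080765, -5858750217388182, -7803162388528430, 19448578352823397,
      -13620048848242092],
     [-2075990692944869, -4685584034562421, 18335593208828035, -17383859139753925],
     [353578949029458, 12498208517218438, -12939040335089876],
     [1553408703468344, -4751752888419751],
     [-366305857705958]],
    [[1889861407174978, -6847690269996718, 7077190521527063, 890140390825562,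
      -868685968054869],
     [-5493390135245679, 21306896950365109, -17517943039181066, 8813372909459857],
     [2324430931785912, -6699591466484513, -1732918458557066],
     [404750420008107, -6011548678046082],
     [179402731256717]],
    [[5563390513549785, -15759551857378179, 11941045355040407],
     [-4435641202460076, 12181327590900472],
     [-885324726871914]],
    [[934194639817251]]],
   [[[-11300368570439, 29472723608958, 120125781958633, -179630961622748, -525396403932233,
      369852634511268, 1248898529779880, -448843986787957, -1444360507967200, 308518160814569,
      449709192373783],
     [110149281261744, -118639755321470, -1231967305902056, 832599907512431, 3756855793455177,
      -1058756801577448, -5417425832124171, -702573595407524, 3799946590079268,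
      344106124331983],
     [-74295119347784, -565531318542435, 1640866162563499, 2376711587732424,
      -5056450598141966, -2024578409364795, 5428053574313064, 1681907330659219,
      -2146646077987370],
     [-399973869829957, 1661772992080051, 1498877231811141, -7419339753585132,
      3230277056055140, 5698226204541861, -3188030940454958, -1375514524641699],
     [1209559734629089, -1202872537159447, -8334762985504382, 7863861142804441,
      1166268674479020, -7929063684257931, 1066884046369428],
     [-217415817023806, -2874970785076077, 5992224421968800, -2769797443358466,
      -4672220490683498, 4995766609909861],
     [-2628402506839986, 5265378005682218, 3412196225466227, 521836796322394,
      2603819766069432],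
     [1429292203400208, -1415152817641179, 1068907960690705, -1074019388806201],
     [1611517422672274, -1356935436619567, -4295112916016348],
     [-746280851554491, 545902447883886],
     [-269917472425159]],
    [[-151509019138434, -274949688852384, 2507610536763786, 1271009555336646,
      -7498312211346219, -1027118565189899, 6639480614102708, 843576774036535,
      -2385745720368986],
     [-788117445030776, 4137587916534267, 1463977204595217, -22210614181516651,
      14261880993126522, 20379381833450972, -13650027748583062, -3557598174151634],
     [2420472655345920, -4870682978987979, -21903987643413420, 35222026798071427,
      2831363478819232, -20824189001436706, 5927819552736562],
     [-793411289290543, -6140183666442263, 27222679414232167, -22957133391365409,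
      -4936100829160696, 6129623619038493],
     [-3421793938819434, 17518823425019636, -15053292498307591, 4070485663600795,
      30517425317734],
     [4112506052166818, -11520816230877334, 8084701154211914, 2089029505379979],
     [-40369571034580, -499761308081248, -3782438366387557],
     [-1850784992102998, 2055820764633956],
     [561989236700854]],
    [[1300239154405066, -2253266675083137, -12203970384889458, 24708045164206930,
      -3687202143273337, -14092394150849071, 6917926620367703],
     [-928449081471942, -10021314002584686, 53546062643582439, -48615911241660499,
      -6505531929961277, 12519720666225419],
     [-4311607696618914, 31767486810249909, -49586343050116218, 20484072616405623,
      1575474061579115],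
     [6120522826156367, -25364031140938916, 22171958033169207, -2881273411621620],
     [-1843815344195976, 2794009574896077, -3993251519161985],
     [-1778804351963319, 1985333635011741],
     [925491691485878]],
    [[-2512480591518546, 22372742873876327, -28898431433551992, 12648374127364900,
      -1052393762529605],
     [8641764266960797, -50976407166036527, 36168173761284390, -3260345670281110],
     [-8182896804259442, 16040618252846208, -11035417211887124],
     [2895806040887613, 3474567428923256],
     [539220537397067]],
    [[-6503167767401626, 15876138248245000, -4185803155880542],
     [11973837878805491, -6183919093268679],
     [-3290672590918895]],
    [[-3101836588920368]]],
   [[[3961332159918, -20915346597428, -23619603065121, 172612366992744, 145581319415767,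
      -462969074345611, -372788043754426, 992883558101222, 269492184061123, -542635435548355,
      -128667253403804],
     [18309669058415, -44963717630819, -7174574568343, -63087936303356, -1013098325263999,
      196883343174866, 3587948249362400, -1813362966361370, -1344861710045275,
      574825197077340],
     [-169313298091735, 260733063740427, 1396869760301708, -2047146402749309,
      -2604643880589988, 2252656728183390, -2457262292778646, 1166350168317287,
      862524582087654],
     [-193025176414741, 1166871234232120, 215280514583991, -3733925118039192,
      2742124150123372, -819518816252834, 891050968238083, -783499276535806],
     [689244955982646, -1103709020061374, -7321786558734747, 9477788740327177,
      2847820766715941, -705833202212715, -1079741901993447],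
     [403428801196624, -3348216301030060, 3733732813110909, -1061771551624747,
      -47876620838649, -88697940685976],
     [-603562429015106, 3400588688972421, 5624058737398907, -5917279765357846,
      -2257021628508436],
     [-72600500425852, 1359427812843039, -3092038662864022, 2989587084908422],
     [-770375183269074, -1197456770980451, -502742939893414],
     [243467139829044, -449216133038611],
     [446258390784658]],
    [[-107358586084563, -13474375226074, 788528250062877, -350628723729439, 393458861841635,
      1845926949713026, -6487658691404948, 1569679532469870, 1381219719722419],
     [-64010179899258, 1751360756980529, -2613351119341596, -2454111245156453,
      13443198449809650, -15468074906418365, 8094358491323425, -1461770423747278],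
     [1815626248121669, -3092272537439919, -11730150114931860, 25154032391274183,
      -16613349773246592, 9858699067587818, -492573563001339],
     [-960655546278137, -5972489859601896, 23678117695659431, -27350948310740970,
      5571671590547856, 1084315451206934],
     [-3199564911502959, 14647901902999784, -11348943314741980, -2389780365659625,
      -1849794074227709],
     [4155054908291984, -7717195480062880, -3417659106790494, 7929848532553649],
     [-1248476922696550, -256541006954680, 3850169860875859],
     [-7867209962629, 706441038035860],
     [-295106883617121]],
    [[1261397055992675, -2896812116159668, -5871007096201433, 22033555075464623,
      -14095134124484248, 9990234760925686, -3498252685994417],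
     [-1680405412825046, -7550933631313703, 43945095812945326, -54255285954305567,
      24153265238384763, -6729345538615967],
     [-4855373756523461, 25817223076178195, -45809075920146565, 15725708426147471,
      -6346912842337998],
     [7892632555701678, -26292552446467321, 15928130302926411, -641399058673345],
     [-6509650484369188, 12422323449189005, -1073109662663126],
     [3079501652708277, -667166442838412],
     [-196969451352256]],
    [[-3118490872620938, 15153448096936796, -29691360407729137, 16634669672252797,
      -4260106591218334],
     [7993859658639869, -28039673432811967, 35260794443177350, 12262428767117],
     [-3117401817493177, 15119118337333404, -8588996349767168],
     [2991467643945169, -7984755513683486],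
     [-1533559818965742]],
    [[756091548117788, 4677620742785884, -3331073881685480],
     [-5210551043976543, 168856094039958],
     [638948790942325]],
    [[1524940794617510]]],
   [[[-5672488592924, 16483947301629, 1654117450600, -62514205398096, 225437322728703,
      190446533516010, -529917304580383, -461259368553605, 288021597552064, 248177525375869,
      40678180937507],
     [23572566585312, 50405565296638, -631891437553651, -148754500834768, 1370027454524089,
      17461758393538, -160377449815833, -365576382046307, -53873434630460, 120939432045694],
     [142846714948885, -552561649640539, 76484522535764, 1845277771307770, -3195230167628099,
      384182040868708, 974679309286256, 2139623781106016, -221962935866876],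
     [-95191244703506, -144844278697356, 3867700648729664, -1367351884938809,
      -3009088339484392, -2132577886777578, 825881763434297, -1785446620379538],
     [-811177954660636, 2081072714955153, -279618444098355, -3413632844692039,
      3896356664696757, -2003670911942911, -1248893911422038],
     [35010023631217, 47114937491821, -6130383617756135, 5814872022430870, 3140077389743742,
      3721074811822308],
     [2003725315260233, -2699344105670926, 2639056758148965, 149965720224362,
      -2334001371278126],
     [119704812860395, 351398663453779, 103511564785819, -2810595097382553],
     [-2246877055394868, 840471082203059, 305924783238552],
     [44130435151896, -1261966033742],
     [796010349043515]],
    [[11252555442100, -293607010998372, 625151533673152, 1276092989709815, -2705448388658514,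
      1375873485521513, 8323644239029, 161176757616817, -423138112180697],
     [-168718071892242, 791052842737171, 5189681507014926, -9650082251659691,
      1343143856728799, -4354507677325123, 6042833859189862, -146496946154436],
     [-213705555681180, 3022675183487527, -12212261650012238, 2244950948593348,
      8363928562673783, -347919547069886, -4309333590208226],
     [172436692017862, -4314905504852586, -3053001413413923, 20766170739901617,
      -5546502848568185, 2384139172178623],
     [1167697688368089, -3715354328450073, 22256951260543553, -15390184164641917,
      -616088815004415],
     [-100069655799097, 5946318473615117, -11821123158087948, -391786679086014],
     [-2208812978905781, 193736917966502, -880720524272089],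
     [870368368887591, -1389816003743735],
     [431477840865932]],
    [[-321397276591654, 2408426975461256, -7877715829719669, 4174611015985999,
      3466548411552829, 920125383992592, -2281466492545911],
     [-271173022038638, -7023532826232437, 5351453610552144, 12354818400826457,
      -13357415513333740, 102269352267361],
     [2937334280518232, -5966908894580213, 16706649165307377, -23043103468542348,
      6004131394240471],
     [316826533320125, 8937925968841771, -21677272950596067, 10555320910952439],
     [-4138916563692680, -43408237485461, 10539278069417781],
     [2136362262687522, -1016175233664720],
     [-290543530172203]],
    [[1401261038809083, -1759282965642064, 5678289446280208, -9307278375997039,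
      4552759729446179],
     [-618182305300473, 9932075011508671, -14899131695642235, 5560572245499891],
     [-3728771061130656, 190972754898472, 5982802469692155],
     [2869099006094382, -2518510382480424],
     [-753025366516981]],
    [[-1927214050737180, 1620277262371070, 10851480600427],
     [1410116368175335, -4899380757321103],
     [482700449678945]],
    [[522954155923882]]],
   [[[9093401568048, -25929532228471, -53999116037260, 95307709490070, 157730995033595,
      158952211750742, -381760912304014, -747157095066501, 230856687546235, 536070482497706,
      144372976226797],
     [-55375546162083, 32371233570477, 919496488356041, -562022212268613, -2714637331030803,
      -342996515667631, 2320405454272796, 3811140300443963, -2321227826740690,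
      -1979006033825189],
     [-110208197256614, 610290585161733, -813148458525040, -1621037071875835,
      4133364060657237, -2582242684486226, 1726937741161792, -1941071891452315,
      574265779685511],
     [178607953623873, -509285694486314, -2706068291473504, 5924600694634793,
      -579277217230074, 3313827445265566, -3868635372927015, 1138063055314498],
     [412700507122168, -1573529962176057, 3918770646959129, -529778549441385,
      -3611144748578260, -1428639866060063, 1919026569903585],
     [-49305271192493, 980619073866748, 2523771845425707, -7447707570289920, 1456202210813868,
      -90940733328576],
     [-1113263651352098, 3020140356198464, -6325589348559047, 4116252437845594,
      492448692468609],
     [295807992208909, -2960449099967906, 2041860384573435, 73554886576808],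
     [734199240962255, -412010259200458, 611248276124166],
     [-2906565828811, 858140130002150],
     [-309453355561449]],
    [[24972989738862, 262494864088118, -1455660481807535, -232433443769305, 4459917415946259,
      -4227410559626866, 2577783339305736, -1458589601575967, 494397733267082],
     [436158735587981, -1651398463949496, -3139130867512103, 13554685651783088,
      -14939184069520825, 20326340548936429, -9906911173862099, 2282064796380022],
     [-37660333992469, -1396568752641598, 14979389957552637, -18265972694021963,
      8250038093852646, -12651331433520880, 4286938658152510],
     [-722118065324316, 4524529807368442, -2688398743449164, -10337960588319049,
      1177253145927503, 108818382108921],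
     [-1395311820740640, 5979125362279430, -22113696750152610, 21367333685882371,
      -1290236237962174],
     [2864862173302106, -14331756533914408, 17554823969001197, -5187009775807043],
     [-893494485200546, 4331257597346282, -2569933338167915],
     [-62357973728141, 1965827755518615],
     [-183659000270566]],
    [[211432866099529, -1259689068057180, 8215318424731104, -15286789724014141,
      14302482512192574, -12264867639463119, 3452259640440722],
     [-721351800846476, 4887575878547433, -13736859263588732, 2501771803947672,
      -16948145852821184, 7283019073113386],
     [-3495086407372561, 5593840931195348, -16934925459402347, 27206927302958069,
      13982900371833],
     [3946601732931018, -12901479223857147, 31318376149580214, -11684327068528284],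
     [-563071257431657, 8394942600970422, -13529045429581269],
     [149174658357357, -2449331049094607],
     [-59767232960989]],
    [[-2026012867360525, -90217703287363, -5303609777129382, 11950002463753005,
      4076456616232713],
     [2918671820886506, 2973295321081780, 23508927544543822, -14454746456212984],
     [6732611361762896, -6161519234158225, -11215481307659251],
     [-5659938658912384, 640425568151181],
     [630022713527617]],
    [[6233958054317417, -11297007399908312, -2907281277680192],
     [-15676837461335872, 11859616046175190],
     [4146258487534959]],
    [[3217559365583519]]],
   [[[-4584752806330, 5676362966188, 49248206232855, 2556809705805, -162319985287597,
      -247787179852506, 88841569607508, 824359452013532, 219360828975847, -614927831012949,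
      -212052703941095],
     [22039691470420, 36225020396197, -338230551430268, -459173222675030, 1146797165826942,
      1800084932247426, -494368110973554, -2890859259845568, -187593985543348,
      1461299022190442],
     [101080128705907, -246832193320573, -737193505034288, 1488228138983923, 2323745703235134,
      -3163612135775461, -2638764413814570, 2220452890565077, 881533394078169],
     [-117724354541325, -16942981982675, 1773323118009133, 657388545523650, -7067948239990378,
      1536616408785872, 4452515742393929, -1625467215827288],
     [-571218325893774, 798345557070901, 2336177503832426, -5661564556166438,
      3429323061487937, 1722724259878526, -2449911014662014],
     [174673472618851, 21589468742782, -3183911304463415, 4291030385165387, 487598284531631,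
      -928018784645741],
     [1456099103227524, -852126981513539, -2113345840352764, 1438526260597337,
      377986545297682],
     [-88070854652387, -255560418397552, 1661764120393027, -1853299314570313],
     [-1578464514303107, 438267466687859, 451870470990074],
     [17787395933980, 70303991548591],
     [594237071730467]],
    [[-2486840486353, -163599987577978, 17554074476427, 1275530113501722, 787380916719157,
      -2234659065340573, -1838412510848600, 1020267916834639, 849843813655913],
     [-252566920042752, 323850643663832, 3574881384059573, -2171340362216823,
      -13031106543251075, 6682333618347101, 6567994227059838, -1961939039646059],
     [217253328454110, 1419231653839312, -4594719076925600, -10100456118653221,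
      17491715251769371, -196161041190211, -4237802869252890],
     [511907140578021, -1923930727702530, -5204886069405127, 18442760404047825,
      -7606997012170247, -3175587396142551],
     [-409360654717601, -602631153938895, 11648615041089744, -6925566116355902,
      905482094154892],
     [-239141081229846, 1611086191025085, -1236560568674142, -1317490880699230],
     [-245467867049610, -213381131832239, -3896445662902815],
     [125586889708313, -316475688970566],
     [275794832103001]],
    [[2194773335897, 1083272693143610, -3373130047646690, -3738623978664369,
      10249631477350900, -2615942510819258, -952245087510067],
     [661254871481139, -5669104131301215, 3760701477194827, 14415385062398286,
      -15630198826914076, 1908756768829123],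
     [-474847707173661, 3358028254998774, 3181798911457907, -11561341646149245,
      4338443552182630],
     [380790482404943, 2554098482411900, -7008814986965014, 5256487045215728],
     [-1099200458629043, -2065378920400257, 4389598492581014],
     [358752607699707, -364492173184707],
     [313516694720792]],
    [[-1128185242516774, 4884015560153129, -4907236580531965, -2679673908575261,
      2336033929306874],
     [2762254657029548, -9395026443311034, 8699521768980810, -937188212705977],
     [-506772910674412, 1709418718933601, -44709334133374],
     [-129220872055016, 2109515989295794],
     [-677456559589905]],
    [[-1645838007629768, 4976514268098484, -4929909274085685],
     [223176538811175, -3308928411916246],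
     [729333613986139]],
    [[242696585340753]]],
   [[[2472482089049, -4456272790116, -20586020070325, -1926028489778, 100035615916301,
      -3334939920899, -276232391859239, 188340241497930, 112672770577778, -94254563702710,
      -51251776497958],
     [-12424942009668, -26751943065527, 196671036899787, 282280658167418, -663659855002462,
      -804745137873976, 1590662886393282, -859603411103660, 85495043251385, 356354215483764],
     [-43694742716326, 167251554162640, 75324910568423, -545428023938570, 44037941487643,
      1493843879013407, -1505253250793578, 819534268157997, 98209858869594],
     [36182554894111, 74521266679591, -797093311082893, -468616853451587, 1576353637393769,
      1017425949997599, -691383418402372, -652169217025361],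
     [202200861315285, -369785393396579, -92531770382930, -96557720599624, -383570966534819,
      -1444516552676417, 742063492546221],
     [77659751513228, -358188945141456, 112718300834821, 793563079777606, -1100818409407404,
      -107497695976235],
     [-543407617420734, 92525179753334, 1239284354639568, -130076514919094, 443538550977316],
     [-197283721579760, 1131166032492068, -378388815085635, 146070414566765],
     [681786038000039, -310591859549406, -323404749343249],
     [11488888346084, -391771067156615],
     [-217255539604252]],
    [[-5010877570757, 109692531315070, -71766129342216, -781795115728177, 431455554794170,
      2071904117061931, -3229048520617911, 1125953638690463, 347387992422986],
     [164382304904258, -246576859124781, -2147942636103351, 2052064246969763,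
      4512257186449310, -6545539694299601, 3491567785960338, -1920608117341436],
     [-9443386689744, -916075093370343, 2709196494698293, 2305896854124025, -4351281144995881,
      89228538739909, 753023609165771],
     [-284997420438637, 1117638346541763, 402798265755000, -2162402304489708,
      -479684718016185, 3732659682772970],
     [-215154032423677, -473075250630665, -917248500653409, -194849748396862, 541077067884660],
     [-51335407133718, 1157696291816732, -1093576543639373, -871508192438300],
     [931309893817503, -966534586398926, 913442702278095],
     [-370818955243640, 147860061418581],
     [-139672641948272]],
    [[23926025419501, -976306580810011, 2742851331615898, 1369144306588722, -6377726133730529,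
      3139393353092883, -1372768299423888],
     [-508204992700489, 3605414034821106, 1046631624129290, -10471423326999878,
      7025358127420251, -1284891923885264],
     [52612299680935, 413429300653178, -5665688692533770, 7255571448013309, 1130938674018178],
     [-348310455842012, -1040725197905398, 1445710735757879, -1157930412720357],
     [1030063748402902, -1808764718183627, -197732533144124],
     [-578669860037272, 928466517522093],
     [163689369411836]],
    [[433940886051161, -180806856541915, -4550964878988894, 6709446962408581,
      -2579159105124048],
     [-62248495890813, -4423386014994689, 7769610482303433, -4306370125580345],
     [-5602169061045, 926332116251662, -1176768834732386],
     [-343112797661954, 1069172856531754],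
     [15531756348231]],
    [[5467180189965, 1211397617635795, -1192397789808636],
     [705053957403424, 356710445616133],
     [-479418892274288]],
    [[-122805334651161]]]]

/-- The sum-of-squares multiplier of `1 - t` in the dual solution: the squares of polynomials
antisymmetric in `u` and `v`. -/
def antisymmetricCoeffs : List (List (List (List ℤ))) :=
  [[[[-13711077430575, -31411887532471, 383155587159318, 167193237918990, -1416049176282438,
      -251881959381146, 720335889143248, 435669116898696, 185080406323932, 42050551056653],
     [-2325050053599, 655899726527075, 162197586814365, -3846826549183246, 821064206062318,
      2210420973378637, -1410798776447138, 568689939529355, -57096473184740],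
     [366295969289413, -352985544616044, -5362345927484828, 6073015275362379,
      10584591039398899, -4778429456898667, -4655106206990953, -800941022405728],
     [-259458511363217, -3696534213038869, 4367075180851652, 7176372126426760,
      -9568148019745965, -739699985732203, 5323795084746171],
     [-1314445167105721, 2849149799227352, 3313584516289795, -15926957951352350,
      1945609304983837, 3455348744256783],
     [1333795101136528, 2924283648758062, -6836446238290484, 5355229582739286,
      -2362465150699461],
     [1418623138111265, -1909220798014137, 3511622959950142, 1018547576134341],
     [-1389552901332219, -174401666185348, 457743717249365],
     [-569164771507747, -265924802011150],
     [430491366328206]],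
    [[323490522137263, -1075931413115984, -3123156162575421, 8719782648328892,
      4905047214191661, -2807004170341159, -964380255915556, -793621580361542],
     [-862463376005841, -2408020432819029, 16039080817615582, -1972652567894620,
      -19162483488440430, 3118041607379734, 517341344435101],
     [-1866219709002107, 11894452034785710, -5304626189494355, -21378392692914322,
      11068934208126455, -65004758392752],
     [4304181356544026, -7185656310963193, -19157895054865799, 21742259163153235,
      2268158039117999],
     [61124301612752, -9201135279417776, 15205628261111600, -7024903179679878],
     [-3014545445673995, 7497476930598640, -3345463183003056],
     [507168241802538, 449029447078267],
     [536356747831998]],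
    [[-237907262224131, 4334512924862717, -4975560746635907, 9093008784139979,
      8626792236663501, -745401122321763],
     [3733064878677674, -11027103624283314, 13638663643066775, 1806508005078488,
      -4665696842816894],
     [-6236534013186768, 11296866971771113, -1824517183269749, -6153784285765361],
     [313390137678140, 516060487685005, -9437969199180750],
     [2764229758876389, -5497447095668945],
     [-50140007128793]],
    [[-4429778348663669, 11924082490983822, -11483759305473726, 12946351776023727],
     [6541337711281151, -15710723244133681, 17278560742639147],
     [-1737603806817955, 5398193778219509],
     [-1119841620803696]],
    [[-3324461748820671, 8880786518247985],
     [760694476419917]]],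
   [[[2348717809758, -12634908010203, -33286567631793, -34191515121864, 376869779831198,
      410571415414337, -1426329467879916, 266497547145782, 777778941306527, -254366579683288],
     [-55420644784404, -45453032074932, -242856345809003, 877703435186076, 1136601527625097,
      -3383385361216067, 1760726865582680, -1990433918590, -1311001735216001],
     [21185393991140, -13476514890847, 520855228161982, -960658927731391, 1079036561945259,
      2967225584471912, -2927317943345896, 172534551594719],
     [561163058931387, 144727953811069, -895731124681128, 3481178898180041, -7567889613158343,
      2991037965613316, 3501814785109817],
     [-162823084638638, -71820880279231, -491857017716653, -6312124740939669,
      8594983885330245, -3236244539769932],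
     [-1546012795678043, -739175271357684, 2440281029902160, 2540376099002098,
      -4064858916585892],
     [278875130258221, 1637445901372730, -1478625377240397, 478159574369190],
     [1893397372707999, -1244129937837853, 249443771223411],
     [-428789853532486, 335233613734659],
     [-564950407422114]],
    [[41366944420396, -364284109589839, 676693411199652, 123824867272210, -337187097511529,
      6192292556917059, -3218652285321286, -1784294982799751],
     [-202493071004566, 423643525725759, -824901902482274, 9466435830444855,
      -9271758204357336, -8490094531669062, 664497386973969],
     [-253714173454967, 950006072490222, 2917587382611233, -31301437207674013,
      22036125575163496, 3640300131235503],
     [609567667749021, -3421903730127733, -4189581172107506, 23989465561651296,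
      -10652421470964703],
     [-372593638340124, 5974547498215189, -1447232058474539, -2261104573684278],
     [940212413203316, -5093161895303041, 2564390001639091],
     [-1278546002569524, 1500172223373456],
     [523135843178250]],
    [[-18616596205995, -476849537305383, 2780385556069675, -18086238940272002,
      12103653879750106, 4891038283589892],
     [-1083780723342046, -2121122878126178, -7658382008813369, 32550984229562467,
      -11612364584748531],
     [-1104583179236852, 8393799267509846, 7026660698836285, -15279196018635213],
     [4492754762538330, -8741661661760061, -1794153208286744],
     [-2845186759054789, 2823943209856517],
     [532628736323920]],
    [[-324769967350712, 2277582136664670, 5226708813472784, -9389922776242505],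
     [1978480525257601, -4448437870191784, -1536541777661347],
     [-3251684245240273, 2180816000945822],
     [1416784301171290]],
    [[-1189504249154367, -24892677554195],
     [28860223497812]]],
   [[[-17882236025117, 82567925655796, -80136671528066, -333728178703851, 954260728236095,
      332573163080646, -1852323476911265, -834850819019088, 1025823674315551,
      1014408230063587],
     [17919067016018, -157060519294675, -216746706702110, 2378716777781828, -1240784075440763,
      -3918496536909943, 2227151901410767, -213384790059007, 190784127611524],
     [203706900794236, -770531995633434, 1353000744765515, -2464255491661781,
      -4203491747223110, 6050555545860660, -802497009835720, -359274087725549],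
     [-102822184920780, 730337007773854, -1752048685886947, -3963626030181957,
      7353931766029766, 970910425826988, -1249605640240356],
     [-503053058654789, 2429796714074317, -1676008067869147, 6718072709699447,
      -1658106632834543, -2795748119112207],
     [346545900748501, -1401765358841307, 4676810903820403, -3681572303870734,
      -540733583468395],
     [31786105651489, -2245619023515432, -1612440839402393, 1219010068496800],
     [89242228433841, 585142068550468, -775496563812188],
     [236581777254152, 757898886774749],
     [-301149298183026]],
    [[-150481666267059, 186468251801929, 1794944408095466, -6490811223098047,
      -3549385594440539, 8616217710597726, -2194360078901888, 109060610066834],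
     [-752377517093231, 1981091284175867, -2716725519579813, -2606369472370936,
      11310687671909091, -6554750999882536, 1953065736170473],
     [965384532952178, 2103147628925743, 83501393853314, 17989398738609396,
      -10048283421081442, -1647591865000819],
     [3449626842122758, -8110223847887558, 7453835786469808, -11127745219478819,
      2272847078541233],
     [-4743528644988870, 646310304734377, -8145113849016205, 1719892725754345],
     [-1552624919839011, 3714420277070214, 1652011724405654],
     [3142672176060703, -408541232345719],
     [-381956939612605]],
    [[-643750027716481, 2935325502157378, 2531931944729048, 1026668143711612,
      -8834384327666863, 3507492621261090],
     [1698305647440204, -8229825505381803, -918083803817823, -7721838401552791,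
      4636071412016291],
     [-3903914234259871, 2649675334302830, -5189457520302917, 3978690273554498],
     [1914916343463258, 5434338488983471, 5116271414101699],
     [3264286995783220, -2941286195427692],
     [-2425877133698480]],
    [[-3498940354618018, 1845624955587054, 2004793630951415, -3181965852714286],
     [-1238850925862299, 6345862675161536, -1727322175026653],
     [5091190081297030, -4207325727743725],
     [-1553304291345354]],
    [[2094790633474289, -3027045455337251],
     [-3301787932701017]]],
   [[[4024568062451, -9799153828907, -62420910567189, -12925498456491, 272401118862689,
      202300586413653, -484300106229431, -120411368260349, -6349904441193, 36620487440287],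
     [-32989987462889, 24321695704540, 16222531549581, -212525757100749, 558470225243762,
      350957343940396, 159638049719558, -425385076834713, 88326206754961],
     [12245907582502, 140639727679822, 9416984009121, 588426220603319, -143430386585950,
      -237398106191672, 1758535648261533, 549593020591517],
     [264351634362676, -344033274921028, 196868164822041, 1511776565522514, -2905845371967762,
      200983864816403, -1562203667738586],
     [-166566902225112, -418962550237045, 290741444564669, -4777901721340587,
      1208163593502348, -553104502691403],
     [-702430489204833, 615360892856602, -805371711505205, 2143364559092349, 1063447646194963],
     [271510872685367, 679657050632432, 965738593996498, 764448681103567],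
     [686504937020635, -443730252124024, -616998633662717],
     [-149933692035242, -241780027897386],
     [-187364190451372]],
    [[26456221774069, 6386727402483, -314900786426157, 635746289178289, 546196797380310,
      1095514832386179, 592343058010652, 532052750630619],
     [92342612803648, -706120003301250, 1019445672725481, 3283054740110062, -3166316432888764,
      -603466049933734, -635325375691859],
     [-456994401058036, -167193561444181, 1625489108995709, -11914194843542366,
      3971431205214290, -819310270088718],
     [-352846329235101, 2067945678855753, -7320248869543816, 10045761624728679,
      -1489722019258858],
     [1205096334795137, -277797329625511, 5846847681609019, -1924876510725130],
     [5691656635182, -1084919778252158, -816593446142200],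
     [-766132349308025, 138845140448397],
     [245233078808467]],
    [[-441881167054914, -470077620615139, 1216924373216039, -5524398988912520,
      2177209090724681, 1007374611863340],
     [-435280315429052, 2301244445182793, -9315217323372122, 13267600313011507,
      -370633340879297],
     [2796759793743406, -757992001742673, 11286024624834149, -6926352262324739],
     [416155839104552, -1711602448097227, -3705740691701158],
     [-3023087239797374, 574940406088248],
     [721095242281999]],
    [[1220527679819287, -755274474614770, 6685173282773334, -2213061131238951],
     [1170194382975892, -2348998221416577, -5056659596378081],
     [-5193002033276943, 2155430887393136],
     [2510081109590569]],
    [[-3278609982262028, 1538006794954509],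
     [3585840855967593]]],
   [[[-3310549273036, -1875373972490, 76554928438951, 45710165954155, -347096109326434,
      -224198960523653, 573218487684930, 677247895587174, -491938731483120, -311614281677216],
     [24631807752274, 5669851186369, -335032979661479, -11727463456122, 644136585939269,
      -320484590097667, 330401972198076, -304350138199613, 131631999226993],
     [-32431004886789, -206574682307967, 400054344844373, 763803482327703, -655170114433271,
      -107312664237900, -24978509264982, 100746586118427],
     [-126522136490449, 568384340613350, 1259691912224999, -2627415700113417,
      -1000713536082200, 2005500388976348, -373404849948552],
     [265322098421444, 289774954210599, -3395286219758512, 1880629423514346, 1684577563905992,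
      -1600518671981962],
     [46570624066231, -1926879647432760, 2095872731052245, 353303109918692, -544886737955265],
     [-415886306879922, 1404768173955491, 71907164238405, -356382170022235],
     [335316692634482, 55415839772930, -143911592047521],
     [-14486984503440, -191922310115881],
     [-79883264622871]],
    [[-39948939658967, -293985078433263, 853623308425848, 1610121522198533, -1657460554020947,
      -326969799369598, 115501111445976, 884385950934114],
     [-143641314082660, 1117296332976607, 309570781368472, -5163084635791374,
      2263748884149546, 586648477308929, 128185646146476],
     [613173800993283, -44415012994117, -8875573913093319, 8065656734164383, 1311737458781609,
      -771371509656061],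
     [38967971204041, -5444635234174529, 14087812307253379, -4516237632885704,
      -2170573135599395],
     [-1375638911118434, 7558051361024006, -6234194135208387, 87897149811931],
     [1180971257927449, -2581871782453204, -98833431846333],
     [-346030532778781, -316918075403816],
     [69256647979446]],
    [[475048362152239, -627858289958113, -4692804195343112, 10260604766819617,
      -1204533004325522, 149430165281533],
     [-105071308762456, -5314025066213275, 19459802106923667, -12941740050565088,
      609090870541054],
     [-2492664659339742, 12839754652831205, -19133544709363611, 3829332050757682],
     [2582995367896995, -8625789403593938, 4731966891741626],
     [-660111399344588, 1464846642621112],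
     [186109471195205]],
    [[-1204817470015035, 7198425786204209, -12438705705973724, 6303633843606258],
     [2711581827055143, -10371217794680902, 8677247729203430],
     [-967185914638490, 3442252422532819],
     [-230045323454933]],
    [[-454478340505009, 2504490435498628],
     [-384536685834439]]],
   [[[-633321063031, 3364917701435, 4518986141104, -17570761858794, -23089013043146,
      22176724510274, 37695827161843, -29029590679026, -8196454809540, 3272718163912],
     [3667047343950, -19276922019032, -33042224083089, 106911576790676, 33704885502555,
      -114038065911292, -38053600188960, -13872623987076, -36972127109905],
     [-2417901388876, -44994745995595, 54437018873269, 51310027577203, 394534913199692,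
      230061587243438, -253274500116265, 7331247269586],
     [-30328812610022, 145500381094996, 81280755836383, -62906762679793, -334775483509005,
      98889099283852, 305583430351970],
     [37363190669381, 105466003454035, -284802019881507, -409592072806011, -167262810097775,
      -203266116905892],
     [81886034841710, -307597817624638, 80588364975580, 82142734211991, 81111730059251],
     [-68008842167327, 63205294819799, 109947225165525, 243332534328482],
     [-64417284962624, 41266228466411, -11375387107233],
     [6665226508423, 13014364482273],
     [36321230747241]],
    [[-10916712867599, -3418325276564, 114264820965178, -66250739177988, 171050072808493,
      281060043115254, 30256341590466, 12788038658881],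
     [-29637634534113, 134601562280449, -150103328459310, 321206495263099, -415599547840169,
      -588587647191366, -54066445224291],
     [116660405589890, -62054212353092, -372564572905083, -1533886950237960, 526167142986078,
      281732501101958],
     [69830855447972, -605028226930021, 175774550979055, 1417656564015989, -258391581407571],
     [-310082934968718, 970714937429324, 279589284490989, -150310148297255],
     [217693352582303, -351129669789918, -54509006262426],
     [-48267430156330, -78798910905494],
     [-5210592513012]],
    [[42560873376936, 49331488510311, 41783842288680, -1335754851989280, 453791619979322,
      304772493772137],
     [-19162739759025, -739913313245723, -1288010076989727, 2477116010049109,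
      -230673143228356],
     [-518172937063928, 691855719735671, 1759656102936394, -1150069782022250],
     [649002580520411, -267487591381000, -420032199917076],
     [-185259077231488, 253813830183547],
     [18046770556083]],
    [[-336646962633095, 206256591258578, 1624168283161106, -1011072823386014],
     [294447761817044, 283630319847199, -1581323669870474],
     [11515704655836, -363991931937805],
     [36329764709581]],
    [[106451510505845, -480981251037951],
     [-335191321325964]]]]

/-- The sum-of-squares multiplier of the Gram determinant in the dual solution. -/
def gramCoeffs : List (List (List (List ℤ))) :=
  [[[[-981660220015, 7183121550356, -11076087640119, -17066106045222, 42800102855038,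
      -31077999388163, 45918692302619, -47002854067113, 12166111675807, -845214635778],
     [14224379339410, -79805393871324, 67503675816361, 285957703939203, -607994303721527,
      564877988007294, -440076295372923, 188317681848528, 6986089920864],
     [-22606209237565, 67400472886929, 200148701343002, -902532667147795, 1303200687745529,
      -1044443651981484, 493568429824961, -101710083258653],
     [-33480596076227, 286095298647830, -902702471089317, 1255637282308225, -984699063750353,
      585745948430877, -209758723937316],
     [87606259190380, -607589513153409, 1303597619627788, -984503961778263, 270595709450140,
      -28375952426397],
     [-62147886781299, 564574276683231, -1043929091098026, 585235456274056, -28754666450797],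
     [88100716667752, -440847489008802, 493124384374837, -210447166756475],
     [-96171903859991, 188657457043800, -102172639066322],
     [26495279962998, 7633006579555],
     [204596129961]],
    [[-39941435563473, 168136099635532, 105948717671394, -1172465631069980, 1734496830565654,
      -1140366118260610, 410772402153431, -66169776730895],
     [67540527634017, 211832544697847, -2589203032742321, 5443888442131624, -4878882719467817,
      2183670930898193, -435022555523479],
     [286260558592953, -2344592497246883, 5443818969242441, -4826570687802635,
      1961194820108871, -513548700199770],
     [-607867764233681, 3469038562201107, -4878906152492459, 1961141421322420, 58704635354473],
     [564621810543255, -2280859771109571, 2183599636204481, -513687663784282],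
     [-440253462416618, 821492692206444, -435148825107080],
     [188496688614818, -132213643902296],
     [7234681504583]],
    [[100190411823383, -1294574369515366, 3840096265921353, -4436561350942465,
      2232274031919495, -412215788788173],
     [-903154644851903, 5443697441824358, -8873482600718331, 5282857554914739,
      -1006564643646293],
     [1303283474994698, -4879085210067433, 4464819894568817, -1006265755620258],
     [-1042871745250707, 2183747485092615, -823657135197804],
     [493356648539597, -435031577529325],
     [-102851112488693]],
    [[627501636114363, -2413582683431660, 2641496805847603, -928882816976816],
     [-984980716203970, 1961207863059150, -1006315154070621],
     [585719436765344, -513445119380907],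
     [-210032331952968]],
    [[135314620188328, 29354384793824],
     [-28365233651930]]],
   [[[34914167856, -6937693146179, 27096253257500, 23161474352415, -93514776311926,
      -21728023877833, 18116246580198, 148489949683049, -47248198808704, -47286423766481],
     [7605753362653, 14645792559798, -64382581397522, -197111669599928, 341625177302498,
      -65085619894981, 157484291134384, -360967942971373, 166938243604671],
     [-26636537270540, 115065895750639, -237880080973422, 5988978440995, 333033271841214,
      17478442384652, -474579828271048, 262614258122769],
     [-27465160043210, 13504882678320, 94682242086699, 141336137174014, -68090487845332,
      -271179320288673, 104365674827342],
     [90588760556422, -310496924086723, 325695672562867, 37407515017310, -390610587459736,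
      275315276830814],
     [31595184303460, 116689718649862, -272636644794469, 132759374355673, 60701884840421],
     [-14017045030092, -108379692475128, 224530822831923, -161696206447754],
     [-158625339880376, 175039115655192, -136274600714505],
     [45600627461077, -450353497572],
     [51261351436693]],
    [[-14309907247370, 67332819835, 11060531689249, 316953625743239, -386777206840735,
      108173450233132, -279674596363568, 242620068888750],
     [-51440947227906, -11129629043405, 584576948781109, -57204160891058, -42610403779318,
      -336652594606904, -74757558943079],
     [182025307869483, -317277422966324, -298273926463297, -51276008862009, 164204043043609,
      344696153423550],
     [-32662729837992, 386714065272215, -1218093028151155, 273828640839127, 445193164507060],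
     [-50206767693114, -107930934851304, 818111603328737, -660705491077637],
     [-46309215460958, 279751230097878, 171475336449146],
     [185596060304121, -242634642607995],
     [-167403340620809]],
    [[238253072200939, -584208775035413, -118687375469, 725791797070407, -324647636359414,
      -16497395612837],
     [-95800603865218, 355730664899165, -726374912703308, 10993932568327, 470362021495285],
     [-658877540330347, 1260431030596536, 324765441934330, -1165892061468617],
     [249988334415787, -481636908701454, 16833607926271],
     [249401164249909, -96902787457771],
     [-125225609969403]],
    [[-140510454248247, 51486619137063, -10966944078392, 25651152533],
     [28701081103572, -438080405650864, 695715213827945],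
     [137777699889280, 315804090011502],
     [56553268581514]],
    [[391032208545362, -445010767900353],
     [-333711437412953]]],
   [[[16853083526, -1033495955159, 6996205904177, -8643908238110, -21925184794122,
      47513415620593, -10435148063383, -36110137954397, 43986450830261, -20335783467286],
     [1432850125756, 3261024118020, -45888095193871, -9903253884130, 313830633287183,
      -227629886978300, -313786182905971, 309500412456081, -30607419123475],
     [-6721158664368, 32858838877674, -35807722565322, 150155780542561, -336109155685915,
      75643412609077, 324886412661779, -203701389883533],
     [6034979664206, -7558435311401, 69730808901157, -260515878302702, 182554328090658,
      70892009308920, -63927620332962],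
     [20222886202651, -179757822954197, 86768242872251, 151203100230593, -77010077921676,
      -13519434241433],
     [-41433730877244, 109052595568650, -7954920272350, -36731833273538, -7748370217586],
     [12818979847256, 226201241491649, -219375004715445, 18375007987012],
     [29777367371366, -194077472746955, 134008033210523],
     [-44945817105577, 13107559158282],
     [22841563434870]],
    [[-3081918832928, 41488399656, 22766656774466, 154357371355177, -425389473052272,
      95136954855001, 328538112532178, -171995225572362],
     [12556388977994, -22787415622019, 218559195869809, -761815184163707, 552968800635782,
      128034549008140, -128993292872784],
     [16607333232392, -154553827621443, -143020302378097, 735779334454941, -321446008589692,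
      -131613832352869],
     [-134804415735254, 425323566811047, -121761178190301, -301988049149617, 154325171474068],
     [119354924617418, -94972276792335, -96971919378063, 37315138844471],
     [89003143943749, -328475661254827, 169691856769649],
     [-115609883911978, 171969588165503],
     [17052432398423]],
    [[36055447170848, -218327528444110, -70886645886, 590749035669036, -311895191972638,
      -107605293109492],
     [-217062713370073, 904957954316238, -591116328710665, -454252130639328, 362790225981989],
     [249160930254761, -431393618832716, 311967769682079, -15119609018728],
     [-70645978496382, -31161170147947, 107824000400624],
     [-105849842481675, -40792543465036],
     [70308688164414]],
    [[260942766977045, -735671515031547, 454277109690264, 15586555729],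
     [-334980990659925, 623411489137973, -347567308764756],
     [-34501023356022, 94193041703412],
     [45139650456995]],
    [[77277385646129, -154211884388975],
     [22628353294548]]]]

variable [Zero A] [One A] [Add A] [Sub A] [Mul A] [Pow A ℕ] [IntCast A]

/-- The dual solution: it bounds the kernel and its diagonal from above wherever `t ≤ 1` and the
Gram determinant is nonnegative. The factor `133` is `135 - 2`, for a hypothetical set of `135`
points. -/
def certificateTerm (t u v : A) : A :=
  (133 : ℤ) * threePointKernel kernelCoeffs t u v + diagonalKernel kernelCoeffs t +
    ((1 : ℤ) - t) * (twistedSumSq 1 0 symmetricCoeffs t u v +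
      twistedSumSq (-1) 1 antisymmetricCoeffs t u v) +
    gramDet t u v * twistedSumSq 1 0 gramCoeffs t u v

/-- The error made by rounding the dual solution: in exact arithmetic the three rotations of
`certificateTerm` would sum to a negative constant. -/
def certificate (t u v : A) : A :=
  (50000000000000000000000000 : ℤ) +
    (certificateTerm t u v + certificateTerm u v t + certificateTerm v t u)

end Certificate

section EvalCertificate

variable {d : ℕ} {R : Type*} [CommRing R] (x : Fin d → R)

@[simp] theorem eval_horner (p : PolyExpr d) (l : List ℤ) :
    (horner p l).eval x = horner (p.eval x) l := by
  induction l with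
  | nil => exact PolyExpr.eval_zero x
  | cons a l ih => rw [horner, PolyExpr.eval_add, PolyExpr.eval_mul, ih, horner,
      PolyExpr.eval_intCast]

theorem eval_divQuadratic (p q : PolyExpr d) (f : ℕ → PolyExpr d) (k : ℕ) :
    (divQuadratic p q f k).eval x =
      divQuadratic (p.eval x) (q.eval x) (fun k => (f k).eval x) k := by
  induction k using Nat.twoStepInduction with
  | zero => rfl
  | one => rfl
  | more k ih₀ ih₁ => simp only [divQuadratic, PolyExpr.eval_add, PolyExpr.eval_sub,
      PolyExpr.eval_mul, ih₀, ih₁]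

@[simp] theorem eval_gegenbauer (ν : ℕ) (p q : PolyExpr d) (k : ℕ) :
    (gegenbauer ν p q k).eval x = gegenbauer ν (p.eval x) (q.eval x) k := by
  induction ν generalizing k with
  | zero => simp only [gegenbauer]; split <;> simp
  | succ ν ih => simp only [gegenbauer, eval_divQuadratic, ih]

theorem eval_certificateTerm (p q r : PolyExpr d) :
    (certificateTerm p q r).eval x = certificateTerm (p.eval x) (q.eval x) (r.eval x) := by
  simp [certificateTerm, threePointKernel, diagonalKernel, twistedSumSq, twistedPoly, gramDet,
    projInner, projNormSq, fourInner, Function.comp_def]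

theorem eval_certificate (p q r : PolyExpr d) :
    (certificate p q r).eval x = certificate (p.eval x) (q.eval x) (r.eval x) := by
  simp only [certificate, PolyExpr.eval_add, PolyExpr.eval_intCast, eval_certificateTerm]

end EvalCertificate

/-- `certificate` as a polynomial expression in three variables. -/
def certificateExpr : PolyExpr 3 := certificate (.var 0) (.var 1) (.var 2)

theorem degreeBound_certificateExpr : certificateExpr.degreeBound < 25 := by decide +kernel

theorem normBound_certificateExpr : certificateExpr.normBound ≤ 3 ^ 82 := by decide +kernel

theorem digitDeviation_certificateExpr :
    digitDeviation (3 ^ 82) 14 (certificateExpr.kroneckerValue (3 ^ 82) 25 +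
      ((2 * 3 ^ 82 + 1) ^ 2 ^ 14 / 2 : ℕ)).toNat < 50000000000000000000000000 := by decide +kernel

theorem abs_certificate_lt {t u v : ℝ} (ht : |t| ≤ 1) (hu : |u| ≤ 1) (hv : |v| ≤ 1) :
    |certificate t u v| < 50000000000000000000000000 := by
  have hx : ∀ i, |![t, u, v] i| ≤ 1 := by simp [Fin.forall_fin_succ, ht, hu, hv]
  have bound := certificateExpr.abs_eval_le degreeBound_certificateExpr
    normBound_certificateExpr (n := 14) (by norm_num) hx
  rw [certificateExpr, eval_certificate] at bound
  exact bound.trans_lt (mod_cast digitDeviation_certificateExpr)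

theorem twistedSumSq_nonneg (ε : ℤ) (o : ℕ) (Ps : List (List (List (List ℤ)))) (t u v : ℝ) :
    0 ≤ twistedSumSq ε o Ps t u v :=
  List.sum_nonneg <| by simpa using fun P _ => sq_nonneg (twistedPoly ε o t u v P)

theorem le_certificateTerm {t u v : ℝ} (ht : |t| ≤ 1) (hgram : 0 ≤ gramDet t u v) :
    133 * threePointKernel kernelCoeffs t u v + diagonalKernel kernelCoeffs t ≤
      certificateTerm t u v := by
  have hsym : 0 ≤ (1 - t) * (twistedSumSq 1 0 symmetricCoeffs t u v +
      twistedSumSq (-1) 1 antisymmetricCoeffs t u v) :=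
    mul_nonneg (sub_nonneg.2 (le_of_abs_le ht))
      (add_nonneg (twistedSumSq_nonneg ..) (twistedSumSq_nonneg ..))
  have hdet := mul_nonneg hgram (twistedSumSq_nonneg 1 0 gramCoeffs t u v)
  rw [certificateTerm]
  push_cast
  linarith

theorem gramDet_rotate {R : Type*} [CommRing R] (t u v : R) : gramDet u v t = gramDet t u v := by
  simp only [gramDet]
  ring

theorem sum_threePointKernel_neg {t u v : ℝ} (ht : |t| ≤ 1) (hu : |u| ≤ 1) (hv : |v| ≤ 1)
    (hgram : 0 ≤ gramDet t u v) :
    (133 * threePointKernel kernelCoeffs t u v + diagonalKernel kernelCoeffs t) +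
      (133 * threePointKernel kernelCoeffs u v t + diagonalKernel kernelCoeffs u) +
      (133 * threePointKernel kernelCoeffs v t u + diagonalKernel kernelCoeffs v) < 0 := by
  have htuv := le_certificateTerm ht hgram
  have huvt := le_certificateTerm (v := t) hu ((gramDet_rotate t u v).symm ▸ hgram)
  have hvtu := le_certificateTerm (u := t) (v := u) hv
    ((gramDet_rotate v t u).symm ▸ hgram)
  have hcert := (le_abs_self _).trans_lt (abs_certificate_lt ht hu hv)
  rw [certificate] at hcert
  push_cast at hcert
  linarith

/-! ### Unit vectors at distance at least one -/

section UnitVectors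

variable {E : Type*} [NormedAddCommGroup E] [InnerProductSpace ℝ E]

/-- The inner product, rescaled so that it ranges over `[-1, 1]` for unit vectors at distance at
least `1`. -/
noncomputable def scaledInner (x y : E) : ℝ := (4 * inner ℝ x y + 1) / 3

theorem scaledInner_comm (x y : E) : scaledInner x y = scaledInner y x := by
  rw [scaledInner, real_inner_comm, scaledInner]

theorem fourInner_scaledInner (x y : E) : fourInner (scaledInner x y) = 4 * inner ℝ x y := by
  rw [fourInner, scaledInner]
  push_cast
  ring

theorem abs_scaledInner_le_one {x y : E} (hx : ‖x‖ = 1) (hy : ‖y‖ = 1) (hxy : 1 ≤ dist x y) :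
    |scaledInner x y| ≤ 1 := by
  have hsub := norm_sub_sq_real x y
  have hadd := norm_add_sq_real x y
  rw [hx, hy] at hsub hadd
  have hdist : 1 ≤ ‖x - y‖ ^ 2 := one_le_pow₀ (dist_eq_norm x y ▸ hxy)
  rw [scaledInner, abs_le]
  constructor <;> linarith [sq_nonneg ‖x + y‖]

theorem inner_orthogonalProjectionOnto_orthogonal_singleton {z : E} (hz : ‖z‖ = 1) (x y : E) :
    inner ℝ ((ℝ ∙ z)ᗮ.orthogonalProjectionOnto x) ((ℝ ∙ z)ᗮ.orthogonalProjectionOnto y) =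
      inner ℝ x y - inner ℝ y z * inner ℝ z x := by
  rw [Submodule.coe_inner, Submodule.coe_orthogonalProjectionOnto_apply,
    Submodule.coe_orthogonalProjectionOnto_apply,
    Submodule.starProjection_orthogonal_val, Submodule.starProjection_orthogonal_val,
    Submodule.starProjection_unit_singleton ℝ hz, Submodule.starProjection_unit_singleton ℝ hz]
  simp only [inner_sub_left, inner_sub_right, inner_smul_left, inner_smul_right,
    real_inner_self_eq_norm_sq, hz, real_inner_comm z, conj_trivial]
  ring

/-- Four times the orthogonal projection to the hyperplane orthogonal to `z`; the factor clears
the denominators of `fourInner`. -/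
noncomputable def scaledProj (z x : E) : (ℝ ∙ z)ᗮ := (4 : ℝ) • (ℝ ∙ z)ᗮ.orthogonalProjectionOnto x

theorem inner_scaledProj {z : E} (hz : ‖z‖ = 1) (x y : E) :
    inner ℝ (scaledProj z x) (scaledProj z y) =
      projInner (scaledInner x y) (scaledInner y z) (scaledInner z x) := by
  rw [scaledProj, scaledProj, real_inner_smul_left, real_inner_smul_right,
    inner_orthogonalProjectionOnto_orthogonal_singleton hz, projInner]
  simp only [fourInner_scaledInner]
  push_cast
  ring

theorem projInner_scaledInner_self {x : E} (hx : ‖x‖ = 1) (z : E) :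
    projInner (scaledInner x x) (scaledInner x z) (scaledInner z x) =
      projNormSq (scaledInner x z) := by
  rw [scaledInner_comm z x, projInner, projNormSq, fourInner_scaledInner x x,
    real_inner_self_eq_norm_sq, hx]
  push_cast
  ring

theorem norm_scaledProj_sq {x z : E} (hx : ‖x‖ = 1) (hz : ‖z‖ = 1) :
    ‖scaledProj z x‖ ^ 2 = projNormSq (scaledInner x z) := by
  rw [← real_inner_self_eq_norm_sq, inner_scaledProj hz, projInner_scaledInner_self hx]

theorem projNormSq_mul_sub_projInner_sq {R : Type*} [CommRing R] (t u v : R) :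
    projNormSq u * projNormSq v - projInner t u v ^ 2 = 8 * gramDet t u v := by
  simp only [projNormSq, projInner, gramDet]
  push_cast
  ring

theorem gramDet_scaledInner_nonneg {x y z : E} (hx : ‖x‖ = 1) (hy : ‖y‖ = 1) (hz : ‖z‖ = 1) :
    0 ≤ gramDet (scaledInner x y) (scaledInner y z) (scaledInner z x) := by
  have cauchySchwarz := sq_le_sq' (neg_le_of_abs_le (abs_real_inner_le_norm _ _))
    (real_inner_le_norm (scaledProj z x) (scaledProj z y))
  rw [mul_pow, norm_scaledProj_sq hx hz, norm_scaledProj_sq hy hz, inner_scaledProj hz,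
    scaledInner_comm x z] at cauchySchwarz
  linarith [projNormSq_mul_sub_projInner_sq (scaledInner x y) (scaledInner y z) (scaledInner z x)]

theorem sum_sum_list_sum_nonneg {α ι : Type*} (s : Finset α) {l : List ι} {K : ι → α → α → ℝ}
    (hK : ∀ i ∈ l, 0 ≤ ∑ x ∈ s, ∑ y ∈ s, K i x y) :
    0 ≤ ∑ x ∈ s, ∑ y ∈ s, (l.map fun i => K i x y).sum := by
  induction l with
  | nil => simp
  | cons i l ih =>
    rw [List.forall_mem_cons] at hK
    simpa only [List.map_cons, List.sum_cons, Finset.sum_add_distrib]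
      using add_nonneg hK.1 (ih hK.2)

theorem sum_sum_threePointKernel_nonneg (hE : Module.finrank ℝ E = 7)
    (G : List (List (List ℤ))) {z : E} (hz : ‖z‖ = 1) {s : Finset E} (hs : ∀ x ∈ s, ‖x‖ = 1) :
    0 ≤ ∑ x ∈ s, ∑ y ∈ s,
      threePointKernel G (scaledInner x y) (scaledInner y z) (scaledInner z x) := by
  have : Fact (Module.finrank ℝ E = 6 + 1) := ⟨hE⟩
  have hdim : Module.finrank ℝ (ℝ ∙ z)ᗮ = 2 * 2 + 2 :=
    Submodule.finrank_orthogonal_span_singleton (norm_ne_zero_iff.1 (hz ▸ one_ne_zero))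
  refine sum_sum_list_sum_nonneg s fun H _ => ?_
  simp only [← List.sum_map_mul_left]
  refine sum_sum_list_sum_nonneg s fun h _ => ?_
  refine (sum_gegenbauer_inner_nonneg two_ne_zero hdim s (scaledProj z)
    (fun x => horner (scaledInner x z) h) H.2).trans_eq ?_
  refine Finset.sum_congr rfl fun x hx => Finset.sum_congr rfl fun y hy => ?_
  rw [inner_scaledProj hz, norm_scaledProj_sq (hs x hx) hz, norm_scaledProj_sq (hs y hy) hz,
    scaledInner_comm x z]
  ring_nf

theorem threePointKernel_self (G : List (List (List ℤ))) {x : E} (hx : ‖x‖ = 1) (z : E) :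
    threePointKernel G (scaledInner x x) (scaledInner x z) (scaledInner z x) =
      diagonalKernel G (scaledInner x z) := by
  rw [threePointKernel, projInner_scaledInner_self hx, scaledInner_comm z x, diagonalKernel]
  simp only [gegenbauer_mul_self, pow_two]

end UnitVectors

theorem card_ne_135 {E : Type*} [NormedAddCommGroup E] [InnerProductSpace ℝ E]
    (hE : Module.finrank ℝ E = 7) {S : Finset E} (hnorm : ∀ x ∈ S, ‖x‖ = 1)
    (hdist : ∀ x ∈ S, ∀ y ∈ S, x ≠ y → 1 ≤ dist x y) :
    S.card ≠ 135 := by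
  classical
  intro hcard
  obtain ⟨x, hx, y, hy, z, hz, hxy, hyz, hzx, hsum⟩ := exists_cyclic_sum_nonneg
    (A := fun x y z => threePointKernel kernelCoeffs (scaledInner x y) (scaledInner y z)
      (scaledInner z x)) (hcard ▸ by norm_num : 2 < S.card)
    fun z hz => sum_sum_threePointKernel_nonneg hE kernelCoeffs (hnorm z hz)
      fun x hx => hnorm x (Finset.mem_of_mem_erase hx)
  simp only [threePointKernel_self kernelCoeffs (hnorm x hx),
    threePointKernel_self kernelCoeffs (hnorm y hy),
    threePointKernel_self kernelCoeffs (hnorm z hz), hcard,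
    show ((135 : ℕ) : ℝ) - 2 = 133 by norm_num] at hsum
  exact hsum.not_gt <| sum_threePointKernel_neg
    (abs_scaledInner_le_one (hnorm x hx) (hnorm y hy) (hdist x hx y hy hxy))
    (abs_scaledInner_le_one (hnorm y hy) (hnorm z hz) (hdist y hy z hz hyz))
    (abs_scaledInner_le_one (hnorm z hz) (hnorm x hx) (hdist z hz x hx hzx))
    (gramDet_scaledInner_nonneg (hnorm x hx) (hnorm y hy) (hnorm z hz))

end KissingNumber

theorem kissing_number_dim7_le_134_general {E : Type*} [NormedAddCommGroup E]
    [InnerProductSpace ℝ E] (hE : Module.finrank ℝ E = 7) (S : Finset E)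
    (hnorm : ∀ x ∈ S, ‖x‖ = 1) (hdist : ∀ x ∈ S, ∀ y ∈ S, x ≠ y → 1 ≤ dist x y) :
    S.card ≤ 134 := by
  by_contra! hcard
  obtain ⟨T, hTS, hT⟩ := Finset.exists_subset_card_eq (Nat.succ_le_of_lt hcard)
  exact KissingNumber.card_ne_135 hE (fun x hx => hnorm x (hTS hx))
    (fun x hx y hy => hdist x (hTS hx) y (hTS hy)) hT

theorem kissing_number_dim7_le_134
    (S : Finset (EuclideanSpace ℝ (Fin 7)))
    (hnorm : ∀ x ∈ S, ‖x‖ = 1)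
    (hdist : ∀ x ∈ S, ∀ y ∈ S, x ≠ y → 1 ≤ dist x y) :
    S.card ≤ 134 :=
  kissing_number_dim7_le_134_general finrank_euclideanSpace_fin S hnorm hdist
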